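/- (Main reduction theorem.) Let 𝒩 be a finite nonempty set of nonempty matroids and let k = min_{N ∈ 𝒩} χ(N) − 1. Then for all sufficiently large n: ex(𝒩, n) = 2ⁿ(1 − 2^{−k}) + ex(𝒟(𝒩), n − k), and an n-dimensional 𝒩-free matroid M satisfies |M| = ex(𝒩, n) if and only if M is isomorphic to (M₀)^{n,k} for some (n−k)-dimensional matroid M₀ that is 𝒟(𝒩)-free with |M₀| = ex(𝒟(𝒩), n − k). -/

import Mathlib

open scoped Classical

/-- `M` has an `N`-restriction: some injective linear image of `N` lies inside `M`. -/
def HasRestriction {α β : Type*} [AddCommMonoid α] [AddCommMonoid β]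
    [Module (ZMod 2) α] [Module (ZMod 2) β] (N : Set α) (M : Set β) : Prop :=
  ∃ ψ : α →ₗ[ZMod 2] β, Function.Injective ψ ∧ ψ '' N ⊆ M

/-- The set of distinct `N`-restrictions of `M` (as subsets of `M`). -/
def restrictionSet {α β : Type*} [AddCommMonoid α] [AddCommMonoid β]
    [Module (ZMod 2) α] [Module (ZMod 2) β] (N : Set α) (M : Set β) : Set (Set β) :=
  {S | S ⊆ M ∧ ∃ ψ : α →ₗ[ZMod 2] β, Function.Injective ψ ∧ S = ψ '' N}

/-- The Turán number for a single excluded matroid `N`. -/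
noncomputable def exNum {α : Type*} [AddCommMonoid α] [Module (ZMod 2) α] (N : Set α) (n : ℕ) : ℕ :=
  sSup {m | ∃ M : Set (Fin n → ZMod 2), 0 ∉ M ∧ ¬ HasRestriction N M ∧ M.ncard = m}

/-- The Turán number for a family of excluded matroids. -/
noncomputable def exNumFam (𝒩 : Set (Σ k : ℕ, Set (Fin k → ZMod 2))) (n : ℕ) : ℕ :=
  sSup {m | ∃ M : Set (Fin n → ZMod 2), 0 ∉ M ∧
    (∀ N ∈ 𝒩, ¬ HasRestriction N.2 M) ∧ M.ncard = m}

/-- The critical number of `M ⊆ 𝔽₂ⁿ`. -/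
noncomputable def critNum {n : ℕ} (M : Set (Fin n → ZMod 2)) : ℕ :=
  sInf {c | ∃ φ : (Fin n → ZMod 2) →ₗ[ZMod 2] (Fin c → ZMod 2), ∀ x ∈ M, φ x ≠ 0}

/-- The rank of `M`: dimension of its span. -/
noncomputable def rankM {n : ℕ} (M : Set (Fin n → ZMod 2)) : ℕ :=
  Module.finrank (ZMod 2) (Submodule.span (ZMod 2) M)

/-- `M` is a copy of `N^{n,t}`. -/
def IsCopyNnt {d : ℕ} (N : Set (Fin d → ZMod 2)) (n t : ℕ)
    (M : Set (Fin n → ZMod 2)) : Prop :=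
  ∃ F : Submodule (ZMod 2) (Fin n → ZMod 2), Module.finrank (ZMod 2) F = n - t ∧
    ∃ θ : (Fin d → ZMod 2) →ₗ[ZMod 2] (Fin n → ZMod 2),
      Function.Injective θ ∧ (∀ x, θ x ∈ F) ∧ M = θ '' N ∪ {x | x ∉ F}

/-- The decomposition family `𝒟(𝒩)`. -/
def decompFam (𝒩 : Set (Σ k : ℕ, Set (Fin k → ZMod 2))) (k : ℕ) :
    Set (Σ k : ℕ, Set (Fin k → ZMod 2)) :=
  {D | 0 ∉ D.2 ∧
    (∃ N ∈ 𝒩, ∃ M : Set (Fin N.1 → ZMod 2), IsCopyNnt D.2 N.1 k M ∧ HasRestriction N.2 M) ∧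
    ∀ D' : Σ k : ℕ, Set (Fin k → ZMod 2), 0 ∉ D'.2 →
      (∃ N ∈ 𝒩, ∃ M : Set (Fin N.1 → ZMod 2), IsCopyNnt D'.2 N.1 k M ∧ HasRestriction N.2 M) →
      HasRestriction D'.2 D.2 → HasRestriction D.2 D'.2}

/-- The cycle matroid of a simple graph. -/
def cycleMatroid {V : Type*} [DecidableEq V] (G : SimpleGraph V) : Set (V → ZMod 2) :=
  {x | ∃ u v, G.Adj u v ∧ x = Pi.single u 1 + Pi.single v 1}

set_option autoImplicit false
set_option linter.unusedSectionVars false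

section part1
variable {V : Type} [AddCommGroup V] [Module (ZMod 2) V]

lemma z2_cancel (x y : V) : x + y + y = x := by
  rw [add_assoc, ZModModule.add_self, add_zero]

lemma z2_eq (s : ZMod 2) : s = 0 ∨ s = 1 := by
  revert s; decide

variable [Fintype V]

lemma card_filter_shift (P : V → Prop) (t : V) :
    (Finset.univ.filter (fun x => P (x + t))).card = (Finset.univ.filter P).card := by
  apply Finset.card_bij (fun x _ => x + t)
  · intro x hx; simpa using hx
  · intro x _ y _ h; simpa using h
  · intro y hy; exact ⟨y - t, by simpa using hy, by simp⟩

lemma affine_step (W : Submodule (ZMod 2) V) (A : Finset V)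
    (hA : Fintype.card W * 2 ≤ A.card) :
    ∃ t, t ∉ W ∧ A.card ^ 2 ≤ 2 * Fintype.card V * (A.filter (fun y => y + t ∈ A)).card := by
  by_contra hcon
  push Not at hcon
  have hsum : ∑ t : V, (A.filter (fun y => y + t ∈ A)).card = A.card ^ 2 := by
    simp_rw [Finset.card_filter]
    rw [Finset.sum_comm]
    have : ∀ y ∈ A, ∑ t : V, (if y + t ∈ A then 1 else 0) = A.card := by
      intro y _
      rw [← Finset.card_filter]
      have := card_filter_shift (fun x => x ∈ A) y
      simp_rw [add_comm _ y] at this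
      rw [this]; congr 1; ext; simp
    rw [Finset.sum_congr rfl this]; simp [sq]
  have hWpos : 0 < Fintype.card W := Fintype.card_pos
  have hWc : (Finset.univ.filter (fun t : V => t ∈ W)).card = Fintype.card W := by
    rw [Fintype.card_subtype]
  have hV : (Finset.univ.filter (fun t : V => t ∈ W)).card + (Finset.univ.filter (fun t : V => ¬ t ∈ W)).card = Fintype.card V := by
    rw [Finset.card_filter_add_card_filter_not]; simp
  have hs2 := Finset.sum_filter_add_sum_filter_not Finset.univ (fun t : V => t ∈ W)
    (fun t => (A.filter (fun y => y + t ∈ A)).card)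
  rw [hsum] at hs2
  have h1 : ∑ t ∈ Finset.univ.filter (fun t : V => t ∈ W), (A.filter (fun y => y + t ∈ A)).card ≤ Fintype.card W * A.card := by
    rw [← hWc, ← smul_eq_mul]
    apply Finset.sum_le_card_nsmul
    intro t _; exact Finset.card_filter_le _ _
  have h2 : ∑ t ∈ Finset.univ.filter (fun t : V => ¬ t ∈ W), (2 * Fintype.card V * (A.filter (fun y => y + t ∈ A)).card + 1) ≤
     (Finset.univ.filter (fun t : V => ¬ t ∈ W)).card * A.card ^ 2 := by
    rw [← smul_eq_mul]
    apply Finset.sum_le_card_nsmul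
    intro t ht; exact hcon t (by simpa using ht)
  rw [Finset.sum_add_distrib, ← Finset.mul_sum] at h2
  simp only [Finset.sum_const, smul_eq_mul, mul_one] at h2
  rw [hWc] at hV
  generalize (Finset.univ.filter (fun t : V => ¬ t ∈ W)).card = u at *
  generalize ∑ t ∈ Finset.univ.filter (fun t : V => ¬ t ∈ W), (A.filter (fun y => y + t ∈ A)).card = s at *
  generalize ∑ t ∈ Finset.univ.filter (fun t : V => t ∈ W), (A.filter (fun y => y + t ∈ A)).card = r at *
  have h3 : 2 * r ≤ A.card ^ 2 := by nlinarith
  have h4 : A.card ^ 2 ≤ 2 * s := by omega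
  have h5 : Fintype.card V * A.card^2 ≤ 2 * Fintype.card V * s := by nlinarith
  have h6 : Fintype.card V * A.card^2 = Fintype.card W * A.card^2 + u * A.card^2 := by rw [← hV]; ring
  have h7 : 0 < A.card ^ 2 := pow_pos (by omega) 2
  nlinarith [Nat.mul_pos hWpos h7]

/-- counting -/
noncomputable def cnt {Y : Type} [Fintype Y] (P : Y → Prop) : ℕ := (Finset.univ.filter P).card

lemma cnt_eq {Y : Type} [Fintype Y] (P : Y → Prop) [DecidablePred P] :
    cnt P = ∑ y, if P y then 1 else 0 := by
  rw [← Finset.card_filter]; unfold cnt; congr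

lemma cnt_filter {Y : Type} [Fintype Y] (P : Y → Prop) [DecidablePred P] :
    (Finset.univ.filter P).card = cnt P := by
  unfold cnt; congr

lemma cnt_congr {Y : Type} [Fintype Y] {P Q : Y → Prop} (h : ∀ y, P y ↔ Q y) :
    cnt P = cnt Q := by
  have : P = Q := funext fun y => propext (h y)
  rw [this]

lemma cnt_mono {Y : Type} [Fintype Y] {P Q : Y → Prop} (h : ∀ y, P y → Q y) :
    cnt P ≤ cnt Q := by
  unfold cnt; exact Finset.card_le_card (fun y hy => by simp at hy ⊢; exact h y hy)

lemma cnt_le_card {Y : Type} [Fintype Y] (P : Y → Prop) : cnt P ≤ Fintype.card Y :=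
  Finset.card_le_univ _

lemma cnt_or {Y : Type} [Fintype Y] (P Q : Y → Prop) : cnt (fun y => P y ∨ Q y) ≤ cnt P + cnt Q := by
  unfold cnt
  refine le_trans (Finset.card_le_card ?_) (Finset.card_union_le _ _)
  intro y hy; simpa using hy

lemma cnt_compl {Y : Type} [Fintype Y] (P : Y → Prop) :
    cnt P + cnt (fun y => ¬ P y) = Fintype.card Y := by
  have := Finset.card_filter_add_card_filter_not (s := (Finset.univ : Finset Y)) P
  rw [cnt_filter, cnt_filter] at this
  simpa using this

lemma cnt_pos {Y : Type} [Fintype Y] {P : Y → Prop} (h : 0 < cnt P) : ∃ y, P y := by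
  obtain ⟨y, hy⟩ := Finset.card_pos.1 h
  exact ⟨y, by simpa using hy⟩

lemma cnt_shift {Y : Type} [AddCommGroup Y] [Fintype Y] (P : Y → Prop) (t : Y) :
    cnt (fun x => P (x + t)) = cnt P := by
  unfold cnt
  apply Finset.card_bij (fun x _ => x + t)
  · intro x hx; simpa using hx
  · intro x _ y _ h; simpa using h
  · intro y hy; exact ⟨y - t, by simpa using hy, by simp⟩

end part1

lemma affine_lemma (h : ℕ) : ∀ c : ℝ, 0 < c → ∃ c' : ℝ, 0 < c' ∧ ∃ n₀ : ℕ, ∀ (V : Type)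
    [AddCommGroup V] [Module (ZMod 2) V] [Fintype V], n₀ ≤ Fintype.card V → ∀ A : Finset V,
    c * Fintype.card V ≤ A.card → ∃ W : Submodule (ZMod 2) V, Module.finrank (ZMod 2) W = h ∧
      c' * Fintype.card V ≤ (Finset.univ.filter (fun y : V => ∀ w ∈ W, y + w ∈ A)).card := by
  induction h with
  | zero =>
    intro c hc
    refine ⟨c, hc, 0, ?_⟩
    intro V _ _ _ _ A hA
    refine ⟨⊥, by simp, ?_⟩
    simpa using hA
  | succ h ih =>
    intro c hc
    obtain ⟨c', hc', n₀, H⟩ := ih c hc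
    refine ⟨c' ^ 2 / 2, by positivity, max n₀ (⌈2 ^ h * 2 / c'⌉₊), ?_⟩
    intro V _ _ _ hn A hA
    obtain ⟨W, hW, hc2⟩ := H V (le_trans (le_max_left _ _) hn) A hA
    set B := Finset.univ.filter (fun y : V => ∀ w ∈ W, y + w ∈ A) with hB
    have hcardW : Fintype.card W = 2 ^ h := by
      rw [Module.card_eq_pow_finrank (K := ZMod 2), hW, ZMod.card]
    have hbig : 2 ^ h * 2 / c' ≤ (Fintype.card V : ℝ) :=
      (Nat.le_ceil _).trans (by exact_mod_cast le_trans (le_max_right _ _) hn)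
    rw [div_le_iff₀ hc'] at hbig
    obtain ⟨t, htW, ht⟩ := affine_step W B (by
      rw [hcardW]
      have : (2 ^ h * 2 : ℝ) ≤ B.card := by linarith
      exact_mod_cast this)
    refine ⟨W ⊔ Submodule.span (ZMod 2) {t}, ?_, ?_⟩
    · have hdis : Disjoint W (Submodule.span (ZMod 2) {t}) := by
        rw [Submodule.disjoint_def]
        intro x hx hx2
        obtain ⟨s, rfl⟩ := Submodule.mem_span_singleton.1 hx2
        rcases z2_eq s with rfl | rfl
        · simp
        · exact absurd (by simpa using hx) htW
      have h1 := Submodule.finrank_sup_add_finrank_inf_eq W (Submodule.span (ZMod 2) {t})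
      rw [hdis.eq_bot, finrank_bot, hW, finrank_span_singleton] at h1
      · simpa using h1
      · rintro rfl; exact htW W.zero_mem
    · have hsub : B.filter (fun y => y + t ∈ B) ⊆ Finset.univ.filter
          (fun y : V => ∀ w ∈ W ⊔ Submodule.span (ZMod 2) {t}, y + w ∈ A) := by
        intro y hy
        simp only [Finset.mem_filter, hB, Finset.mem_univ, true_and] at hy ⊢
        intro w hw
        obtain ⟨a, ha, b, hb, rfl⟩ := Submodule.mem_sup.1 hw
        obtain ⟨s, rfl⟩ := Submodule.mem_span_singleton.1 hb
        rcases z2_eq s with rfl | rfl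
        · simpa using hy.1 a ha
        · have := hy.2 a ha
          rw [one_smul, add_comm a t, ← add_assoc]; exact this
      have h1 := Finset.card_le_card hsub
      have h2 : (B.card : ℝ) ^ 2 ≤ 2 * Fintype.card V * (B.filter (fun y => y + t ∈ B)).card := by
        exact_mod_cast ht
      have h3 : ((B.filter (fun y => y + t ∈ B)).card : ℝ) ≤ (Finset.univ.filter
          (fun y : V => ∀ w ∈ W ⊔ Submodule.span (ZMod 2) {t}, y + w ∈ A)).card := by
        exact_mod_cast h1
      have hVpos : (0:ℝ) < Fintype.card V := by exact_mod_cast Fintype.card_pos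
      refine le_trans ?_ h3
      have h4 : (c' * Fintype.card V) ^ 2 ≤ (B.card : ℝ) ^ 2 := by gcongr
      have h5 := h4.trans h2
      have : (c' ^ 2 / 2 * Fintype.card V) * (2 * Fintype.card V) ≤
        ((B.filter (fun y => y + t ∈ B)).card : ℝ) * (2 * Fintype.card V) := by
        nlinarith
      exact le_of_mul_le_mul_right this (by positivity)

section part2
variable {V : Type} [AddCommGroup V] [Module (ZMod 2) V] [Fintype V]

/-- bb -/
def BBin {E : Type} [AddCommGroup E] [Module (ZMod 2) E] (M : Set V) (G : Submodule (ZMod 2) V)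
    (g : E →ₗ[ZMod 2] V) : Prop :=
  ∀ c, c ≠ 0 → g c ∉ G ∧ ∀ y ∈ G, g c + y ∈ M

/-- bb -/
def HasBB (M : Set V) (h j : ℕ) : Prop :=
  ∃ (G : Submodule (ZMod 2) V) (g : (Fin j → ZMod 2) →ₗ[ZMod 2] V),
    Module.finrank (ZMod 2) G = h ∧ BBin M G g

lemma hasBB_of {E : Type} [AddCommGroup E] [Module (ZMod 2) E] [Module.Finite (ZMod 2) E]
    {M : Set V} {G : Submodule (ZMod 2) V} {g : E →ₗ[ZMod 2] V} (hB : BBin M G g) {h j : ℕ}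
    (hG : Module.finrank (ZMod 2) G = h) (hE : Module.finrank (ZMod 2) E = j) : HasBB M h j := by
  have e : (Fin j → ZMod 2) ≃ₗ[ZMod 2] E := LinearEquiv.ofFinrankEq _ _ (by simp [hE])
  refine ⟨G, g ∘ₗ e.toLinearMap, hG, ?_⟩
  intro c hc
  exact hB (e c) (by simpa using hc)

/-- number of missing elements in a coset -/
noncomputable def miss (M : Set V) (G : Submodule (ZMod 2) V) (x : V) : ℕ :=
  cnt (fun y : G => x + (y : V) ∉ M)

lemma miss_shift (M : Set V) (G : Submodule (ZMod 2) V) (x t : V) (ht : t ∈ G) :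
    miss M G (x + t) = miss M G x := by
  unfold miss
  rw [← cnt_shift (fun y : G => x + (y : V) ∉ M) ⟨t, ht⟩]
  apply cnt_congr; intro y; simp [add_assoc, add_comm t]

lemma incr {k h : ℕ} {M : Set V} {G : Submodule (ZMod 2) V}
    {g : (Fin k → ZMod 2) →ₗ[ZMod 2] V} (hB : BBin M G g) (W : Submodule (ZMod 2) V)
    (hWG : W ≤ G) (hW : Module.finrank (ZMod 2) W = h) (x : V) (hx : ∀ c, x + g c ∉ G)
    (hall : ∀ c, ∀ w ∈ W, x + g c + w ∈ M) : HasBB M h (k + 1) := by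
  have : BBin M W (g.coprod (LinearMap.toSpanSingleton (ZMod 2) V x)) := by
    rintro ⟨c, s⟩ hcs
    simp only [LinearMap.coprod_apply, LinearMap.toSpanSingleton_apply]
    rcases z2_eq s with rfl | rfl
    · have hc : c ≠ 0 := by rintro rfl; exact hcs rfl
      have := hB c hc
      simp only [zero_smul, add_zero]
      exact ⟨fun h => this.1 (hWG h), fun y hy => this.2 y (hWG hy)⟩
    · simp only [one_smul]
      rw [add_comm (g c)]
      exact ⟨fun h => hx c (hWG h), hall c⟩
  exact hasBB_of this hW (by simp)

/-- constant property for affine lemma -/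
def AffProp (h : ℕ) (ε : ℝ) (n₀ : ℕ) : Prop := ∀ (V : Type)
    [AddCommGroup V] [Module (ZMod 2) V] [Fintype V], n₀ ≤ Fintype.card V → ∀ A : Finset V,
    ε * Fintype.card V ≤ A.card → ∃ W : Submodule (ZMod 2) V, Module.finrank (ZMod 2) W = h ∧
      ∃ y, ∀ w ∈ W, y + w ∈ A

lemma affProp_exists (h : ℕ) (ε : ℝ) (hε : 0 < ε) : ∃ n₀, AffProp h ε n₀ := by
  obtain ⟨c', hc', n₀, H⟩ := affine_lemma h ε hε
  refine ⟨n₀, ?_⟩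
  intro V _ _ _ hn A hA
  obtain ⟨W, hW, hc⟩ := H V hn A hA
  refine ⟨W, hW, ?_⟩
  have hVpos : (0:ℝ) < Fintype.card V := by exact_mod_cast Fintype.card_pos
  rw [cnt_filter] at hc
  have h1 : (0:ℝ) < (cnt (fun y : V => ∀ w ∈ W, y + w ∈ A)) :=
    lt_of_lt_of_le (by positivity) hc
  have h2 : 0 < (cnt (fun y : V => ∀ w ∈ W, y + w ∈ A)) := by exact_mod_cast h1
  exact cnt_pos h2

lemma incr2 {k h n₀ : ℕ} {ε : ℝ} (hA : AffProp h ε n₀) {M : Set V} {G : Submodule (ZMod 2) V}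
    {g : (Fin k → ZMod 2) →ₗ[ZMod 2] V} (hB : BBin M G g) (hM : ¬ HasBB M h (k + 1))
    (hn : n₀ ≤ Fintype.card G) (x : V) (hx : ∀ c, x + g c ∉ G) :
    ((cnt (fun y : G => ∀ c, x + g c + (y : V) ∈ M)) : ℝ)
      < ε * Fintype.card G := by
  by_contra hcon
  push Not at hcon
  obtain ⟨W, hW, y, hy⟩ := hA G hn _ hcon
  apply hM
  refine incr hB (W.map G.subtype) (Submodule.map_subtype_le _ _) ?_ (x + y) ?_ ?_
  · rw [← hW]; exact Submodule.finrank_map_subtype_eq _ _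
  · intro c hc
    apply hx c
    have := G.sub_mem hc y.2
    convert this using 1; abel
  · rintro c w ⟨w, hw, rfl⟩
    have := hy w hw
    simp only [Finset.mem_filter, Finset.mem_univ, true_and] at this
    have := this c
    convert this using 1
    simp; abel

lemma BBin.perturb {k : ℕ} {M : Set V} {G : Submodule (ZMod 2) V}
    {g : (Fin k → ZMod 2) →ₗ[ZMod 2] V} (hB : BBin M G g)
    (r : (Fin k → ZMod 2) →ₗ[ZMod 2] V) (hr : ∀ c, r c ∈ G) : BBin M G (g + r) := by
  intro c hc
  obtain ⟨h1, h2⟩ := hB c hc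
  refine ⟨fun h => h1 ?_, fun y hy => ?_⟩
  · have := G.sub_mem h (hr c)
    simpa using this
  · have := h2 (r c + y) (G.add_mem (hr c) hy)
    simpa [add_assoc] using this

lemma incl_excl {ι Y : Type} [Fintype ι] [Fintype Y] (P : ι → Y → Prop) (c c' : ι) (hcc : c ≠ c') :
    (cnt (fun y => P c y ∧ P c' y)) + Fintype.card Y ≤
    (∑ i, (cnt (fun y => P i y))) +
      (cnt (fun y => ∀ i, ¬ P i y)) := by
  simp_rw [cnt_eq]
  rw [Finset.sum_comm, Fintype.card_eq_sum_ones, ← Finset.sum_add_distrib,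
    ← Finset.sum_add_distrib]
  apply Finset.sum_le_sum
  intro y _
  by_cases h1 : P c y ∧ P c' y
  · have : ∑ i ∈ ({c, c'} : Finset ι), (if P i y then 1 else 0) ≤ ∑ i, (if P i y then 1 else 0) :=
      Finset.sum_le_sum_of_subset (Finset.subset_univ _)
    rw [Finset.sum_pair hcc] at this
    simp only [h1.1, h1.2, if_true] at this
    simp only [h1, and_self, if_true]
    omega
  · rw [if_neg h1]
    by_cases h2 : ∀ i, ¬ P i y
    · rw [if_pos h2]; omega
    · push Not at h2
      obtain ⟨i, hi⟩ := h2
      have := Finset.single_le_sum (f := fun i => if P i y then 1 else 0) (fun _ _ => Nat.zero_le _)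
        (Finset.mem_univ i)
      simp only [hi, if_true] at this
      omega

lemma cover {ι Y : Type} [Fintype ι] [Fintype Y] (P : ι → Y → Prop) :
    Fintype.card Y ≤
    (∑ i, (cnt (fun y => P i y))) +
      (cnt (fun y => ∀ i, ¬ P i y)) := by
  simp_rw [cnt_eq]
  rw [Finset.sum_comm, Fintype.card_eq_sum_ones,
    ← Finset.sum_add_distrib]
  apply Finset.sum_le_sum
  intro y _
  by_cases h2 : ∀ i, ¬ P i y
  · rw [if_pos h2]; omega
  · push Not at h2
    obtain ⟨i, hi⟩ := h2
    have := Finset.single_le_sum (f := fun i => if P i y then 1 else 0) (fun _ _ => Nat.zero_le _)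
      (Finset.mem_univ i)
    simp only [hi, if_true] at this
    omega

lemma cover_miss {k h n₀ : ℕ} {ε : ℝ} (hA : AffProp h ε n₀) {M : Set V} {G : Submodule (ZMod 2) V}
    {g : (Fin k → ZMod 2) →ₗ[ZMod 2] V} (hB : BBin M G g) (hM : ¬ HasBB M h (k + 1))
    (hn : n₀ ≤ Fintype.card G) (x : V) (hx : ∀ c, x + g c ∉ G) :
    (1 - ε) * Fintype.card G ≤ ∑ c, (miss M G (x + g c) : ℝ) := by
  have h1 := incr2 hA hB hM hn x hx
  have h2 := cover (fun (c : Fin k → ZMod 2) (y : G) => x + g c + (y : V) ∉ M)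
  simp only [not_not] at h2
  have h3 : (Fintype.card G : ℝ) ≤ (∑ c, (miss M G (x + g c) : ℝ)) +
     ((cnt (fun y : G => ∀ c, x + g c + (y : V) ∈ M)) : ℝ) := by
    unfold miss
    exact_mod_cast h2
  linarith

lemma exists_shift {Y : Type} [AddCommGroup Y] [Fintype Y] (P Q : Y → Prop) :
    ∃ t, cnt P * cnt Q ≤
      Fintype.card Y * (cnt (fun y => P (y + t) ∧ Q y)) := by
  by_contra hcon
  push Not at hcon
  have hsum : ∑ t, (cnt (fun y => P (y + t) ∧ Q y)) =
      cnt P * cnt Q := by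
    simp_rw [cnt_eq]
    rw [Finset.sum_comm, mul_comm, Finset.sum_mul]
    apply Finset.sum_congr rfl
    intro y _
    by_cases hQ : Q y
    · simp only [hQ, and_true, if_true, one_mul]
      simp_rw [← cnt_eq, add_comm y]
      exact cnt_shift P y
    · simp [hQ]
  have := Finset.sum_lt_sum_of_nonempty (s := Finset.univ) Finset.univ_nonempty (fun t _ => hcon t)
  rw [← Finset.mul_sum, hsum] at this
  simp at this

lemma pair_aux {k h n₀ : ℕ} {ε δ : ℝ} (hA : AffProp h ε n₀) {M : Set V} {G : Submodule (ZMod 2) V}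
    {g : (Fin k → ZMod 2) →ₗ[ZMod 2] V} (hB : BBin M G g) (hM : ¬ HasBB M h (k + 1))
    (hn : n₀ ≤ Fintype.card G) (x : V) (hx : ∀ c, x + g c ∉ G)
    (hδ : ∑ c, (miss M G (x + g c) : ℝ) ≤ (1 + δ) * Fintype.card G) (c c' : Fin k → ZMod 2)
    (i : Fin k) (hc : c i = 1) (hc' : c' i = 0) :
    (miss M G (x + g c) : ℝ) * miss M G (x + g c') ≤ (δ + ε) * Fintype.card G ^ 2 := by
  obtain ⟨t, ht⟩ := exists_shift (fun y : G => x + g c + (y : V) ∉ M) (fun y : G => x + g c' + (y : V) ∉ M)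
  set r : (Fin k → ZMod 2) →ₗ[ZMod 2] V := (LinearMap.proj i).smulRight (t : V) with hr
  have hrG : ∀ c, r c ∈ G := fun c => by simpa [hr] using G.smul_mem _ t.2
  have hB' := hB.perturb r hrG
  have hx' : ∀ c, x + (g + r) c ∉ G := by
    intro c h
    apply hx c
    have := G.sub_mem h (hrG c)
    convert this using 1; rw [LinearMap.add_apply]; abel
  have h1 := incr2 hA hB' hM hn x hx'
  have h2 := incl_excl (fun (c : Fin k → ZMod 2) (y : G) => x + (g + r) c + (y : V) ∉ M) c c'
    (by rintro rfl; rw [hc] at hc'; exact absurd hc' (by decide))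
  simp only [not_not] at h2
  have h3 : ∀ c, (cnt (fun y : G => x + (g + r) c + (y : V) ∉ M)) =
      miss M G (x + g c) := by
    intro c
    rw [← miss_shift M G (x + g c) _ (hrG c)]
    unfold miss
    simp only [LinearMap.add_apply, add_assoc]
  simp_rw [h3] at h2
  have h4 : cnt (fun y : G => x + g c + ((y + t : G) : V) ∉ M ∧ x + g c' + (y : V) ∉ M) =
    cnt (fun y : G => x + (g + r) c + (y : V) ∉ M ∧ x + (g + r) c' + (y : V) ∉ M) := by
    apply cnt_congr
    intro y
    simp only [LinearMap.add_apply, hr,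
      LinearMap.smulRight_apply, LinearMap.proj_apply, hc, hc', zero_smul, one_smul, add_zero,
      Submodule.coe_add]
    rw [show x + (g c + (t : V)) + y = x + g c + (y + t) by abel]
  rw [h4] at ht
  set q := (cnt (fun y : G => x + (g + r) c + (y : V) ∉ M ∧ x + (g + r) c' + (y : V) ∉ M))
  set p := (cnt (fun y : G => ∀ c, x + (g + r) c + (y : V) ∈ M))
  have h2' : (q : ℝ) + Fintype.card G ≤ ∑ c, (miss M G (x + g c) : ℝ) + p := by exact_mod_cast h2
  have ht' : (miss M G (x + g c) : ℝ) * miss M G (x + g c') ≤ Fintype.card G * q := by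
    exact_mod_cast ht
  have hGpos : (0:ℝ) < Fintype.card G := by exact_mod_cast Fintype.card_pos
  have : (q : ℝ) ≤ (δ + ε) * Fintype.card G := by nlinarith
  nlinarith

lemma pair_lemma {k h n₀ : ℕ} {ε δ : ℝ} (hA : AffProp h ε n₀) {M : Set V} {G : Submodule (ZMod 2) V}
    {g : (Fin k → ZMod 2) →ₗ[ZMod 2] V} (hB : BBin M G g) (hM : ¬ HasBB M h (k + 1))
    (hn : n₀ ≤ Fintype.card G) (x : V) (hx : ∀ c, x + g c ∉ G)
    (hδ : ∑ c, (miss M G (x + g c) : ℝ) ≤ (1 + δ) * Fintype.card G) (c c' : Fin k → ZMod 2)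
    (hcc : c ≠ c') :
    (miss M G (x + g c) : ℝ) * miss M G (x + g c') ≤ (δ + ε) * Fintype.card G ^ 2 := by
  obtain ⟨i, hi⟩ := Function.ne_iff.1 hcc
  rcases z2_eq (c i) with h0 | h0 <;> rcases z2_eq (c' i) with h1 | h1
  · exact absurd (h0.trans h1.symm) hi
  · rw [mul_comm]; exact pair_aux hA hB hM hn x hx hδ c' c i h1 h0
  · exact pair_aux hA hB hM hn x hx hδ c c' i h0 h1
  · exact absurd (h0.trans h1.symm) hi

end part2

section part3
variable {V : Type} [AddCommGroup V] [Module (ZMod 2) V] [Fintype V]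

lemma card_pow (G : Submodule (ZMod 2) V) :
    Fintype.card G = 2 ^ (Module.finrank (ZMod 2) G) := by
  rw [Module.card_eq_pow_finrank (K := ZMod 2), ZMod.card]

lemma card_pow' : Fintype.card V = 2 ^ (Module.finrank (ZMod 2) V) := by
  rw [Module.card_eq_pow_finrank (K := ZMod 2), ZMod.card]

lemma avg (M : Set V) (G : Submodule (ZMod 2) V) (Y : V → Prop)
    (hY : ∀ x, ∀ y ∈ G, Y x → Y (x + y)) :
    cnt (fun x => Y x ∧ x ∉ M) * Fintype.card G = ∑ x, if Y x then miss M G x else 0 := by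
  have h1 : ∀ x, (if Y x then miss M G x else 0) = ∑ y : G, if Y x ∧ x + (y : V) ∉ M then 1 else 0 := by
    intro x
    by_cases hx : Y x
    · simp only [hx, if_true, true_and]; unfold miss; rw [cnt_eq]
    · simp [hx]
  simp_rw [h1]
  rw [Finset.sum_comm]
  have h2 : ∀ y : G, (∑ x, if Y x ∧ x + (y : V) ∉ M then 1 else 0) = cnt (fun x => Y x ∧ x ∉ M) := by
    intro y
    rw [← cnt_eq, ← cnt_shift (fun x => Y x ∧ x ∉ M) (y : V)]
    apply cnt_congr
    intro x
    have : Y x ↔ Y (x + y) := ⟨hY x y y.2, fun h => by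
      have := hY _ y y.2 h
      rwa [z2_cancel] at this⟩
    rw [this]
  rw [Finset.sum_congr rfl (fun y _ => h2 y)]
  simp [mul_comm]

lemma sum_miss (M : Set V) (G : Submodule (ZMod 2) V) (v : V) :
    ∑ x, miss M G (x + v) = cnt (fun x => x ∉ M) * Fintype.card G := by
  have h0 := Equiv.sum_comp (Equiv.addRight v) (fun x => miss M G x)
  simp only [Equiv.coe_addRight] at h0
  rw [h0]
  have := avg M G (fun _ => True) (by simp)
  simpa using this.symm

lemma sum_sum_miss {k : ℕ} (M : Set V) (G : Submodule (ZMod 2) V) (g : (Fin k → ZMod 2) →ₗ[ZMod 2] V) :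
    ∑ x, ∑ c, (miss M G (x + g c) : ℝ) = 2 ^ k * cnt (fun x => x ∉ M) * Fintype.card G := by
  rw [Finset.sum_comm]
  have : ∀ c, ∑ x, (miss M G (x + g c) : ℝ) = cnt (fun x => x ∉ M) * Fintype.card G := by
    intro c; exact_mod_cast sum_miss M G (g c)
  simp_rw [this]
  simp; ring

lemma cnt_U {k : ℕ} (G : Submodule (ZMod 2) V) (g : (Fin k → ZMod 2) →ₗ[ZMod 2] V) :
    cnt (fun x => ¬ ∀ c, x + g c ∉ G) ≤ 2 ^ k * Fintype.card G := by
  have h1 : ∀ c, cnt (fun x => x + g c ∈ G) = Fintype.card G := by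
    intro c
    rw [cnt_shift (fun x => x ∈ G) (g c)]
    unfold cnt; rw [Fintype.card_subtype]
  calc cnt (fun x => ¬ ∀ c, x + g c ∉ G) ≤ ∑ c, cnt (fun x => x + g c ∈ G) := by
        simp_rw [cnt_eq]
        rw [Finset.sum_comm]
        apply Finset.sum_le_sum
        intro x _
        by_cases h : ¬ ∀ c, x + g c ∉ G
        · rw [if_pos h]
          push Not at h
          obtain ⟨c, hc⟩ := h
          have := Finset.single_le_sum (f := fun c => if x + g c ∈ G then 1 else 0)
            (fun _ _ => Nat.zero_le _) (Finset.mem_univ c)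
          simpa [hc] using this
        · rw [if_neg h]; exact Nat.zero_le _
    _ = _ := by simp [h1]

lemma exists_sub {h : ℕ} (G : Submodule (ZMod 2) V) (hG : h ≤ Module.finrank (ZMod 2) G) :
    ∃ W : Submodule (ZMod 2) V, W ≤ G ∧ Module.finrank (ZMod 2) W = h := by
  obtain ⟨f, hf⟩ := exists_linearIndependent_of_le_finrank hG
  refine ⟨(Submodule.span (ZMod 2) (Set.range f)).map G.subtype, Submodule.map_subtype_le _ _, ?_⟩
  rw [Submodule.finrank_map_subtype_eq, finrank_span_eq_card hf]; simp

end part3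

lemma erdos_stone (k : ℕ) : ∀ (h : ℕ) (ε : ℝ), 0 < ε → ∃ n₀ : ℕ, ∀ (V : Type)
    [AddCommGroup V] [Module (ZMod 2) V] [Fintype V], n₀ ≤ Fintype.card V → ∀ M : Set V,
    2 ^ k * (cnt (fun x => x ∉ M) : ℝ) ≤ (2 - ε) * Fintype.card V → HasBB M h k := by
  induction k with
  | zero =>
    intro h ε _
    refine ⟨2 ^ h, ?_⟩
    intro V _ _ _ hn M _
    rw [card_pow', Nat.pow_le_pow_iff_right (by norm_num)] at hn
    obtain ⟨W, -, hW⟩ := exists_sub (V := V) ⊤ (by simpa using hn)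
    exact ⟨W, 0, hW, fun c hc => absurd (Subsingleton.elim _ _) hc⟩
  | succ k ih =>
    intro h ε hε
    set ε' := min (ε / 8) (1 / 8) with hε'
    have h0 : 0 < ε' := by positivity
    have h1 : ε' ≤ ε / 8 := min_le_left _ _
    have h2 : ε' ≤ 1 / 8 := min_le_right _ _
    obtain ⟨n₁, hA⟩ := affProp_exists h ε' h0
    obtain ⟨n₂, H⟩ := ih n₁ 1 one_pos
    refine ⟨max n₂ ⌈2 ^ k * 2 ^ n₁ / ε'⌉₊, ?_⟩
    intro V _ _ _ hn M hM
    have hbig : 2 ^ k * 2 ^ n₁ / ε' ≤ (Fintype.card V : ℝ) :=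
      (Nat.le_ceil _).trans (by exact_mod_cast le_trans (le_max_right _ _) hn)
    rw [div_le_iff₀ h0] at hbig
    have hVpos : (0:ℝ) < Fintype.card V := by exact_mod_cast Fintype.card_pos
    rw [pow_succ] at hM
    obtain ⟨G, g, hG, hB⟩ := H V (le_trans (le_max_left _ _) hn) M (by nlinarith)
    by_contra hcon
    have hGc : Fintype.card G = 2 ^ n₁ := by rw [card_pow, hG]
    have hn1 : n₁ ≤ Fintype.card G := by rw [hGc]; exact Nat.lt_two_pow_self.le
    have hGpos : (0:ℝ) < Fintype.card G := by exact_mod_cast Fintype.card_pos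
    have hs := sum_sum_miss M G g
    have hU := cnt_U G g
    have hc := cnt_compl (fun x => ∀ c, x + g c ∉ G)
    have hlow : (cnt (fun x => ∀ c, x + g c ∉ G) : ℝ) * ((1 - ε') * Fintype.card G) ≤
        ∑ x, ∑ c, (miss M G (x + g c) : ℝ) := by
      unfold cnt
      rw [← nsmul_eq_mul]
      refine le_trans (Finset.card_nsmul_le_sum _ (fun x => ∑ c, (miss M G (x + g c) : ℝ)) _ ?_)
        (Finset.sum_le_sum_of_subset_of_nonneg (Finset.subset_univ _) ?_)
      · intro x hx
        exact cover_miss hA hB hcon hn1 x (by simpa using hx)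
      · intro x _ _; positivity
    rw [hs] at hlow
    have hU' : (cnt (fun x => ¬ ∀ c, x + g c ∉ G) : ℝ) ≤ 2 ^ k * Fintype.card G := by exact_mod_cast hU
    have hc' : (cnt (fun x => ∀ c, x + g c ∉ G) : ℝ) + cnt (fun x => ¬ ∀ c, x + g c ∉ G) = Fintype.card V := by
      exact_mod_cast hc
    have hGc' : (Fintype.card G : ℝ) = 2 ^ n₁ := by exact_mod_cast hGc
    have h5 : (cnt (fun x => ∀ c, x + g c ∉ G) : ℝ) * (1 - ε') ≤ 2 ^ k * cnt (fun x => x ∉ M) := by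
      refine le_of_mul_le_mul_right ?_ hGpos
      linarith
    have h6 : (1 - ε') * Fintype.card V ≤ (cnt (fun x => ∀ c, x + g c ∉ G) : ℝ) := by
      rw [hGc'] at hU'; linarith
    have h7 : (1 - ε') * Fintype.card V * (1 - ε') ≤ 2 ^ k * cnt (fun x => x ∉ M) := 
      le_trans (mul_le_mul_of_nonneg_right h6 (by linarith)) h5
    nlinarith [mul_pos h0 hVpos]

section part4
variable {V : Type} [AddCommGroup V] [Module (ZMod 2) V] [Fintype V]

lemma eval_unif {E G : Type} [AddCommGroup E] [Module (ZMod 2) E] [AddCommGroup G]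
    [Module (ZMod 2) G] [Fintype G] [Fintype (E →ₗ[ZMod 2] G)] (e : E) (he : e ≠ 0)
    (P : G → Prop) :
    cnt (fun r : E →ₗ[ZMod 2] G => P (r e)) * Fintype.card G =
      Fintype.card (E →ₗ[ZMod 2] G) * cnt P := by
  obtain ⟨l, hl⟩ : ∃ l : Module.Dual (ZMod 2) E, l e ≠ 0 := by
    by_contra hcon
    push Not at hcon
    exact he ((Module.forall_dual_apply_eq_zero_iff (ZMod 2) e).1 hcon)
  have hl1 : l e = 1 := (z2_eq _).resolve_left hl
  have h1 : ∀ t : G, cnt (fun r : E →ₗ[ZMod 2] G => P (r e + t)) =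
      cnt (fun r : E →ₗ[ZMod 2] G => P (r e)) := by
    intro t
    rw [← cnt_shift (fun r : E →ₗ[ZMod 2] G => P (r e)) (l.smulRight t)]
    apply cnt_congr; intro r; simp [hl1]
  have h2 : ∑ t : G, cnt (fun r : E →ₗ[ZMod 2] G => P (r e + t)) =
      Fintype.card (E →ₗ[ZMod 2] G) * cnt P := by
    simp_rw [cnt_eq (Y := E →ₗ[ZMod 2] G)]
    rw [Finset.sum_comm]
    have : ∀ r : E →ₗ[ZMod 2] G, (∑ t : G, if P (r e + t) then 1 else 0) = cnt P := by
      intro r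
      rw [← cnt_eq, ← cnt_shift P (r e)]
      apply cnt_congr; intro y; rw [add_comm]
    rw [Finset.sum_congr rfl (fun r _ => this r)]
    simp
  simp_rw [h1] at h2
  simpa [mul_comm] using h2

lemma random_ext {E : Type} [AddCommGroup E] [Module (ZMod 2) E] [Fintype E]
    (M : Set V) (G : Submodule (ZMod 2) V) (g : E →ₗ[ZMod 2] V) (H : Finset G)
    (hm : ∀ e, e ≠ 0 → miss M G (g e) * (Fintype.card E * H.card) < Fintype.card G) :
    ∃ r : E →ₗ[ZMod 2] G, ∀ e, e ≠ 0 → ∀ y ∈ H, g e + (r e : V) + (y : V) ∈ M := by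
  by_contra hcon
  push Not at hcon
  haveI : Finite (E →ₗ[ZMod 2] G) := DFunLike.finite _
  letI : Fintype (E →ₗ[ZMod 2] G) := Fintype.ofFinite _
  set Rc := Fintype.card (E →ₗ[ZMod 2] G) with hRc
  have hR : 0 < Rc := Fintype.card_pos
  have hGpos : 0 < Fintype.card G := Fintype.card_pos
  set I := (Finset.univ.filter (fun e : E => e ≠ 0)) ×ˢ H with hI
  have h1 : Rc ≤ ∑ p ∈ I, cnt (fun r : E →ₗ[ZMod 2] G => g p.1 + (r p.1 : V) + (p.2 : V) ∉ M) := by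
    simp_rw [cnt_eq (Y := E →ₗ[ZMod 2] G)]
    rw [Finset.sum_comm, hRc, Fintype.card_eq_sum_ones]
    apply Finset.sum_le_sum
    intro r _
    obtain ⟨e, he, y, hy, hbad⟩ := hcon r
    have := Finset.single_le_sum (s := I)
      (f := fun p : E × G => if g p.1 + (r p.1 : V) + (p.2 : V) ∉ M then 1 else 0)
      (fun _ _ => Nat.zero_le _) (a := (e, y)) (by simp [hI, he, hy])
    simpa [hbad] using this
  have h2 : ∀ p ∈ I, cnt (fun r : E →ₗ[ZMod 2] G => g p.1 + (r p.1 : V) + (p.2 : V) ∉ M) * Fintype.card G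
      = Rc * miss M G (g p.1) := by
    rintro ⟨e, y⟩ hp
    have he : e ≠ 0 := by simp [hI] at hp; exact hp.1
    have := eval_unif e he (fun z : G => g e + (z : V) + (y : V) ∉ M)
    rw [this]
    congr 1
    rw [← miss_shift M G (g e) y y.2]
    unfold miss
    apply cnt_congr; intro z
    rw [show g e + (z : V) + y = g e + y + z by abel]
  have h3 : Rc * Fintype.card G ≤ Rc * ∑ p ∈ I, miss M G (g p.1) := by
    calc Rc * Fintype.card G ≤ (∑ p ∈ I, cnt (fun r : E →ₗ[ZMod 2] G => g p.1 + (r p.1 : V) + (p.2 : V) ∉ M)) * Fintype.card G :=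
          Nat.mul_le_mul_right _ h1
      _ = _ := by rw [Finset.sum_mul, Finset.sum_congr rfl h2, Finset.mul_sum]
  have h4 := Nat.le_of_mul_le_mul_left h3 hR
  have hIc : I.card ≤ Fintype.card E * H.card := by
    rw [hI, Finset.card_product]
    exact Nat.mul_le_mul_right _ (Finset.card_le_univ _)
  have h5 : (∑ p ∈ I, miss M G (g p.1)) * (Fintype.card E * H.card) ≤
      (Fintype.card E * H.card) * (Fintype.card G - 1) := by
    rw [Finset.sum_mul]
    refine le_trans (Finset.sum_le_card_nsmul _ _ (Fintype.card G - 1) ?_) ?_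
    · intro p hp
      have := hm p.1 (by simp [hI] at hp; exact hp.1)
      omega
    · rw [smul_eq_mul]; exact Nat.mul_le_mul_right _ hIc
  have hpos : 0 < Fintype.card E * H.card := by
    refine Nat.mul_pos Fintype.card_pos ?_
    by_contra h0
    have : I = ∅ := by rw [hI, Finset.card_eq_zero.1 (by omega : H.card = 0)]; simp
    rw [this] at h1; simp at h1; omega
  have h6 : Fintype.card G * (Fintype.card E * H.card) ≤ (Fintype.card E * H.card) * (Fintype.card G - 1) :=
    le_trans (Nat.mul_le_mul_right _ h4) h5
  rw [mul_comm] at h6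
  have := Nat.le_of_mul_le_mul_left h6 hpos
  omega

lemma alg_lemma {k : ℕ} (g : (Fin k → ZMod 2) →ₗ[ZMod 2] V) (X T : Set V)
    (hX : ∀ x ∈ X, ∃ c, x + g c ∈ T) (hT : ∀ t ∈ T, ∀ c, t + g c ∈ T → c = 0)
    (hadd : ∀ a ∈ T, ∀ b ∈ T, a + b ∈ X → a + b ∈ T)
    (hc : 4 * cnt (fun x => x ∉ X) < cnt (fun x => x ∈ T)) :
    ∃ F : Submodule (ZMod 2) V, T ⊆ F ∧ Module.finrank (ZMod 2) F + k = Module.finrank (ZMod 2) V ∧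
      ∀ v, (∃ a ∈ T, a + v ∈ T) → v ∈ F := by
  have hsX : ∀ v, cnt (fun z => z + v ∉ X) = cnt (fun x => x ∉ X) := fun v =>
    cnt_shift (fun x => x ∉ X) v
  have key : ∀ v, (∃ a ∈ T, a + v ∈ T) →
      cnt (fun z => z ∈ T ∧ z + v ∉ T) ≤ 2 * cnt (fun x => x ∉ X) := by
    rintro v ⟨a, ha, hb⟩
    have h1 : cnt (fun z => z ∈ T ∧ z + v ∉ T) ≤ cnt (fun z => z + a ∉ X ∨ z + v ∉ X) := by
      apply cnt_mono
      rintro z ⟨hz, hzv⟩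
      by_contra hcon
      push Not at hcon
      have h2 := hadd z hz a ha hcon.1
      have h3 := hadd _ h2 _ hb
      rw [show z + a + (a + v) = z + v + a + a by abel, z2_cancel] at h3
      exact hzv (h3 hcon.2)
    have h2 := cnt_or (fun z => z + a ∉ X) (fun z => z + v ∉ X)
    rw [hsX, hsX] at h2
    omega
  let F : Submodule (ZMod 2) V :=
    { carrier := {v | ∃ a ∈ T, a + v ∈ T}
      zero_mem' := by
        obtain ⟨t, ht⟩ := cnt_pos (lt_of_le_of_lt (Nat.zero_le _) hc)
        exact ⟨t, ht, by simpa using ht⟩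
      add_mem' := by
        intro v w hv hw
        have h1 := key v hv
        have h2 := key w hw
        have h3 := cnt_or (fun z => z ∈ T ∧ z + v ∉ T) (fun z => z ∈ T ∧ z + w ∉ T)
        obtain ⟨z, hz, hz'⟩ : ∃ z, z ∈ T ∧ ¬ ((z ∈ T ∧ z + v ∉ T) ∨ (z ∈ T ∧ z + w ∉ T)) := by
          by_contra hcon
          push Not at hcon
          have := cnt_mono (P := fun x => x ∈ T) hcon
          omega
        push Not at hz'
        refine ⟨z + v, hz'.1 hz, ?_⟩
        rw [show z + v + (v + w) = z + w + v + v by abel, z2_cancel]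
        exact hz'.2 hz
      smul_mem' := by
        intro s v hv
        rcases z2_eq s with rfl | rfl
        · rw [zero_smul]
          obtain ⟨t, ht, -⟩ := hv
          exact ⟨t, ht, by simpa using ht⟩
        · rwa [one_smul] }
  have hex : ∀ v, ∃ z ∈ T, z + v ∈ X := by
    intro v
    by_contra hcon
    push Not at hcon
    have := cnt_mono (P := fun x => x ∈ T) hcon
    rw [hsX] at this
    omega
  have hF : ∀ v, v ∈ F ↔ ∃ a ∈ T, a + v ∈ T := fun v => Iff.rfl
  refine ⟨F, ?_, ?_, fun v hv => hv⟩
  · intro t ht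
    obtain ⟨z, hz, hzt⟩ := hex t
    exact ⟨z, hz, hadd z hz t ht hzt⟩
  · have hinj : Function.Injective g := by
      rw [← LinearMap.ker_eq_bot, LinearMap.ker_eq_bot']
      intro c hgc
      obtain ⟨z, hz, -⟩ := hex 0
      exact hT z hz c (by rw [hgc]; simpa using hz)
    have hcompl : IsCompl F (LinearMap.range g) := by
      constructor
      · rw [Submodule.disjoint_def]
        rintro x ⟨a, ha, hb⟩ ⟨c, rfl⟩
        rw [hT a ha c hb, map_zero]
      · rw [codisjoint_iff, eq_top_iff]
        intro v _
        obtain ⟨z, hz, hzv⟩ := hex v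
        obtain ⟨c, hc⟩ := hX _ hzv
        have h1 : v + g c ∈ F := ⟨z, hz, by rwa [← add_assoc]⟩
        have : v = (v + g c) + g c := (z2_cancel _ _).symm
        rw [this]
        exact Submodule.add_mem_sup h1 ⟨c, rfl⟩
    rw [← Submodule.finrank_add_eq_of_isCompl hcompl, LinearMap.finrank_range_of_inj hinj]
    simp

end part4

section part5
variable {V : Type} [AddCommGroup V] [Module (ZMod 2) V] [Fintype V]

/-- good set -/
def Xset {k : ℕ} (M : Set V) (G : Submodule (ZMod 2) V) (g : (Fin k → ZMod 2) →ₗ[ZMod 2] V)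
    (δ : ℝ) : Set V :=
  {x | (∀ c, x + g c ∉ G) ∧ ∑ c, (miss M G (x + g c) : ℝ) ≤ (1 + δ) * Fintype.card G}

/-- sparse set -/
def Tset {k : ℕ} (M : Set V) (G : Submodule (ZMod 2) V) (g : (Fin k → ZMod 2) →ₗ[ZMod 2] V)
    (δ ρ : ℝ) : Set V :=
  {t | t ∈ Xset M G g δ ∧ (∀ c, c ≠ 0 → (miss M G (t + g c) : ℝ) ≤ ρ * Fintype.card G) ∧
    ρ * Fintype.card G < miss M G t}

variable {k : ℕ} {M : Set V} {G : Submodule (ZMod 2) V} {g : (Fin k → ZMod 2) →ₗ[ZMod 2] V}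
  {δ ρ ε η : ℝ} {h n₀ : ℕ}

lemma Xset_shift_g {x : V} (hx : x ∈ Xset M G g δ) (c : Fin k → ZMod 2) :
    x + g c ∈ Xset M G g δ := by
  obtain ⟨h1, h2⟩ := hx
  refine ⟨fun c' => ?_, ?_⟩
  · rw [add_assoc, ← map_add]; exact h1 _
  · refine le_trans (le_of_eq ?_) h2
    have := Equiv.sum_comp (Equiv.addLeft c) (fun c' => (miss M G (x + g c') : ℝ))
    rw [← this]
    apply Finset.sum_congr rfl
    intro c' _
    simp [add_assoc]

lemma Xset_shift_G {x : V} (hx : x ∈ Xset M G g δ) (y : V) (hy : y ∈ G) :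
    x + y ∈ Xset M G g δ := by
  obtain ⟨h1, h2⟩ := hx
  refine ⟨fun c' h => h1 c' ?_, ?_⟩
  · have := G.sub_mem h hy
    convert this using 1; abel
  · refine le_trans (le_of_eq ?_) h2
    apply Finset.sum_congr rfl
    intro c' _
    rw [show x + y + g c' = x + g c' + y by abel, miss_shift _ _ _ _ hy]

lemma Tset_shift_G {x : V} (hx : x ∈ Tset M G g δ ρ) (y : V) (hy : y ∈ G) :
    x + y ∈ Tset M G g δ ρ := by
  obtain ⟨h1, h2, h3⟩ := hx
  refine ⟨Xset_shift_G h1 y hy, fun c hc => ?_, ?_⟩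
  · rw [show x + y + g c = x + g c + y by abel, miss_shift _ _ _ _ hy]; exact h2 c hc
  · rwa [miss_shift _ _ _ _ hy]

lemma Xset_T (hA : AffProp h ε n₀) (hB : BBin M G g) (hM : ¬ HasBB M h (k + 1))
    (hn : n₀ ≤ Fintype.card G) (hε : ε ≤ 1 / 2) (hρ : ρ * 2 ^ (k + 1) < 1)
    (hκ : (δ + ε) * 2 ^ (k + 1) ≤ ρ) {x : V} (hx : x ∈ Xset M G g δ) :
    ∃ c, x + g c ∈ Tset M G g δ ρ := by
  have hGpos : (0:ℝ) < Fintype.card G := by exact_mod_cast Fintype.card_pos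
  have h1 := cover_miss hA hB hM hn x hx.1
  have hK : (0:ℝ) < 2 ^ (k+1) := by positivity
  obtain ⟨c₀, hc₀⟩ : ∃ c, (Fintype.card G : ℝ) ≤ miss M G (x + g c) * 2 ^ (k + 1) := by
    by_contra hcon
    push Not at hcon
    have := Finset.sum_lt_sum_of_nonempty (s := Finset.univ) Finset.univ_nonempty (fun t _ => hcon t)
    rw [← Finset.sum_mul] at this
    simp only [Finset.sum_const, Finset.card_univ, Fintype.card_fun, ZMod.card, Fintype.card_fin, nsmul_eq_mul] at this
    push_cast at this
    rw [pow_succ] at this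
    have hK' : (0:ℝ) < 2 ^ k := by positivity
    have h3 : (∑ c, (miss M G (x + g c) : ℝ)) * 2 < Fintype.card G := by
      refine lt_of_mul_lt_mul_left ?_ hK'.le
      linarith
    nlinarith
  refine ⟨c₀, Xset_shift_g hx c₀, ?_, ?_⟩
  · intro c hc
    have := pair_lemma hA hB hM hn x hx.1 hx.2 c₀ (c₀ + c) (by simpa using hc)
    rw [map_add, ← add_assoc] at this
    have h4 : (miss M G (x + g c₀ + g c) : ℝ) * Fintype.card G ≤ (ρ * Fintype.card G) * Fintype.card G := by
      have hm : (0:ℝ) ≤ miss M G (x + g c₀ + g c) := by positivity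
      calc (miss M G (x + g c₀ + g c) : ℝ) * Fintype.card G
          ≤ miss M G (x + g c₀ + g c) * (miss M G (x + g c₀) * 2 ^ (k + 1)) := by gcongr
        _ = (miss M G (x + g c₀) * miss M G (x + g c₀ + g c)) * 2 ^ (k+1) := by ring
        _ ≤ ((δ + ε) * Fintype.card G ^ 2) * 2 ^ (k+1) := by gcongr
        _ = ((δ + ε) * 2 ^ (k+1)) * Fintype.card G ^ 2 := by ring
        _ ≤ ρ * Fintype.card G ^ 2 := by gcongr
        _ = _ := by ring
    exact le_of_mul_le_mul_right h4 hGpos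
  · refine lt_of_mul_lt_mul_right (lt_of_lt_of_le ?_ hc₀) hK.le
    nlinarith

lemma Tset_add (hA : AffProp h ε n₀) (hB : BBin M G g) (hM : ¬ HasBB M h (k + 1))
    (hn : n₀ ≤ Fintype.card G) (hε : ε ≤ 1 / 2) (hρ : ρ * 2 ^ (k + 1) * 2 ^ h < 1)
    (hρ' : ρ * 2 ^ (k + 1) < 1)
    (hκ : (δ + ε) * 2 ^ (k + 1) ≤ ρ) (hGh : h ≤ Module.finrank (ZMod 2) G)
    {a b : V} (ha : a ∈ Tset M G g δ ρ) (hb : b ∈ Tset M G g δ ρ)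
    (hab : a + b ∈ Xset M G g δ) : a + b ∈ Tset M G g δ ρ := by
  have hGpos : (0:ℝ) < Fintype.card G := by exact_mod_cast Fintype.card_pos
  obtain ⟨c₀, hc₀⟩ := Xset_T hA hB hM hn hε hρ' hκ hab
  by_cases h0 : c₀ = 0
  · subst h0; simpa using hc₀
  exfalso
  obtain ⟨i, hi⟩ := Function.ne_iff.1 h0
  have hi1 : c₀ i = 1 := (z2_eq _).resolve_left hi
  let l : (Fin k → ZMod 2) →ₗ[ZMod 2] ZMod 2 := LinearMap.proj i
  let g' : ((Fin k → ZMod 2) × ZMod 2) →ₗ[ZMod 2] V :=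
    (g + l.smulRight a).coprod (LinearMap.toSpanSingleton (ZMod 2) V (b + g c₀))
  have hg' : ∀ c s, g' (c, s) = g c + c i • a + s • (b + g c₀) := by
    intro c s; simp [g', l]
  have hprop : ∀ e, e ≠ 0 → g' e ∉ G ∧ (miss M G (g' e) : ℝ) ≤ ρ * Fintype.card G := by
    rintro ⟨c, s⟩ he
    rw [hg']
    rcases z2_eq s with rfl | rfl <;> rcases z2_eq (c i) with hci | hci <;> rw [hci]
    · have hc : c ≠ 0 := by rintro rfl; exact he rfl
      obtain ⟨h1, h2⟩ := hB c hc
      simp only [zero_smul, add_zero]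
      refine ⟨h1, ?_⟩
      have : miss M G (g c) = 0 := by
        unfold miss
        exact Nat.eq_zero_of_not_pos (fun h => by
          obtain ⟨y, hy⟩ := cnt_pos h; exact hy (h2 y y.2))
      rw [this]
      have : 0 ≤ ρ * Fintype.card G := by
        refine le_trans ?_ (ha.2.1 c hc); positivity
      simpa using this
    · have hc : c ≠ 0 := by rintro rfl; exact absurd hci (by simp)
      simp only [zero_smul, add_zero, one_smul]
      rw [add_comm (g c)]
      exact ⟨ha.1.1 c, ha.2.1 c hc⟩
    · have hc : c₀ + c ≠ 0 := by
        intro h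
        have := congrFun h i
        simp [hi1, hci] at this
      simp only [zero_smul, add_zero, one_smul]
      rw [show g c + (b + g c₀) = b + g (c₀ + c) by rw [map_add]; abel]
      exact ⟨hb.1.1 _, hb.2.1 _ hc⟩
    · have hc : c ≠ 0 := by rintro rfl; exact absurd hci (by simp)
      simp only [one_smul]
      rw [show g c + a + (b + g c₀) = a + b + g c₀ + g c by abel]
      exact ⟨hc₀.1.1 c, hc₀.2.1 c hc⟩
  obtain ⟨W, hWG, hW⟩ := exists_sub G hGh
  set H : Finset G := Finset.univ.filter (fun y : G => (y : V) ∈ W) with hH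
  have hHc : H.card ≤ 2 ^ h := by
    rw [← hW, ← card_pow]
    rw [← Finset.card_univ (α := W)]
    apply Finset.card_le_card_of_injOn (fun y : G => if hy : (y : V) ∈ W then (⟨y, hy⟩ : W) else 0)
    · intro y _; simp
    · intro y hy z hz hyz
      have hy' : (y : V) ∈ W := by simpa [hH] using hy
      have hz' : (z : V) ∈ W := by simpa [hH] using hz
      simp only [hy', hz', dif_pos] at hyz
      exact Subtype.ext (Subtype.mk.inj hyz)
  obtain ⟨r, hr⟩ := random_ext M G g' H (by
    intro e he
    have h1 := (hprop e he).2
    have hE : Fintype.card ((Fin k → ZMod 2) × ZMod 2) = 2 ^ (k+1) := by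
      simp [pow_succ, ZMod.card]
    rw [hE]
    have h2 : (miss M G (g' e) : ℝ) * (2 ^ (k+1) * H.card) < Fintype.card G := by
      calc (miss M G (g' e) : ℝ) * (2 ^ (k+1) * H.card) 
          ≤ (miss M G (g' e) : ℝ) * (2 ^ (k+1) * 2 ^ h) := by
            gcongr; exact_mod_cast hHc
        _ ≤ (ρ * Fintype.card G) * (2 ^ (k+1) * 2 ^ h) := by gcongr
        _ = (ρ * 2 ^ (k+1) * 2 ^ h) * Fintype.card G := by ring
        _ < 1 * Fintype.card G := by gcongr
        _ = _ := one_mul _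
    exact_mod_cast h2)
  apply hM
  refine hasBB_of (G := W) (g := g' + G.subtype ∘ₗ r) ?_ hW (by simp)
  intro e he
  refine ⟨fun hmem => (hprop e he).1 ?_, ?_⟩
  · have := G.sub_mem (hWG hmem) (r e).2
    simpa using this
  · intro y hy
    have := hr e he ⟨y, hWG hy⟩ (by simpa [hH] using hy)
    simpa using this

lemma cnt_notX (hA : AffProp h ε n₀) (hB : BBin M G g) (hM : ¬ HasBB M h (k + 1))
    (hn : n₀ ≤ Fintype.card G) (hε0 : 0 < ε) (hδ : 0 < δ) (hδ1 : δ ≤ 1) (hη : ε * 4 = δ * η)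
    (hcard : 2 ^ k * (cnt (fun x => x ∉ M) : ℝ) ≤ Fintype.card V)
    (hU : 2 ^ k * (Fintype.card G : ℝ) ≤ ε * Fintype.card V) :
    (cnt (fun x => x ∉ Xset M G g δ) : ℝ) ≤ η * Fintype.card V := by
  have hGpos : (0:ℝ) < Fintype.card G := by exact_mod_cast Fintype.card_pos
  have hVpos : (0:ℝ) < Fintype.card V := by exact_mod_cast Fintype.card_pos
  set f : V → ℝ := fun x => ∑ c, (miss M G (x + g c) : ℝ) with hf
  set Bad : V → Prop := fun x => (∀ c, x + g c ∉ G) ∧ (1 + δ) * Fintype.card G < f x with hBad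
  have hs := sum_sum_miss M G g
  have hUc : (cnt (fun x => ¬ ∀ c, x + g c ∉ G) : ℝ) ≤ 2 ^ k * Fintype.card G := by
    exact_mod_cast cnt_U G g
  have hc' : (cnt (fun x => ∀ c, x + g c ∉ G) : ℝ) + cnt (fun x => ¬ ∀ c, x + g c ∉ G) = Fintype.card V := by
    exact_mod_cast cnt_compl (fun x => ∀ c, x + g c ∉ G)
  have hlow : (cnt (fun x => ∀ c, x + g c ∉ G) : ℝ) * ((1 - ε) * Fintype.card G) +
      cnt Bad * (δ * Fintype.card G) ≤ ∑ x, f x := by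
    rw [cnt_eq, cnt_eq]
    push_cast
    rw [Finset.sum_mul, Finset.sum_mul, ← Finset.sum_add_distrib]
    apply Finset.sum_le_sum
    intro x _
    have hf0 : 0 ≤ f x := by simp only [hf]; positivity
    by_cases h1 : ∀ c, x + g c ∉ G
    · have h2 := cover_miss hA hB hM hn x h1
      change _ ≤ f x at h2
      rw [if_pos h1]
      by_cases h3 : Bad x
      · rw [if_pos h3]; have := h3.2; nlinarith
      · rw [if_neg h3]; linarith
    · have h3 : ¬ Bad x := fun h => h1 h.1
      rw [if_neg h1, if_neg h3]; linarith
  have hX : (cnt (fun x => x ∉ Xset M G g δ) : ℝ) ≤ cnt (fun x => ¬ ∀ c, x + g c ∉ G) + cnt Bad := by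
    have := cnt_or (fun x => ¬ ∀ c, x + g c ∉ G) Bad
    have h2 : cnt (fun x => x ∉ Xset M G g δ) ≤ cnt (fun x => (¬ ∀ c, x + g c ∉ G) ∨ Bad x) := by
      apply cnt_mono
      intro x hx
      by_contra hcon
      rw [not_or, not_not] at hcon
      refine hx ⟨hcon.1, ?_⟩
      by_contra h4
      exact hcon.2 ⟨hcon.1, not_le.1 h4⟩
    exact_mod_cast h2.trans this
  rw [hs] at hlow
  have h5 : (cnt (fun x => ∀ c, x + g c ∉ G) : ℝ) * (1 - ε) + cnt Bad * δ ≤ Fintype.card V := by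
    refine le_trans ?_ hcard
    refine le_of_mul_le_mul_right ?_ hGpos
    linarith
  set u : ℝ := ((cnt (fun x => ¬ ∀ c, x + g c ∉ G) : ℕ) : ℝ)
  set w : ℝ := ((cnt (fun x => ∀ c, x + g c ∉ G) : ℕ) : ℝ)
  set v : ℝ := ((Fintype.card V : ℕ) : ℝ)
  have hu : u ≤ ε * v := hUc.trans hU
  have hu0 : 0 ≤ u := Nat.cast_nonneg _
  have h6 : cnt Bad * δ ≤ 2 * ε * v := by
    have : w = v - u := by linarith
    rw [this] at h5; nlinarith
  have h7 : (cnt Bad : ℝ) ≤ η / 2 * v := by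
    refine le_of_mul_le_mul_right ?_ hδ
    have : η / 2 * v * δ = (δ * η) / 2 * v := by ring
    rw [this, ← hη]; linarith
  have hηp : 0 < η := by
    by_contra h; push Not at h; nlinarith
  have h8 : ε ≤ η / 4 := by nlinarith
  nlinarith

theorem avg_le (M : Set V) (G : Submodule (ZMod 2) V) (Y : V → Prop)
    (hY : ∀ x, ∀ y ∈ G, Y x → Y (x + y)) (B : ℝ) (hB : 0 ≤ B)
    (h : ∀ x, Y x → (miss M G x : ℝ) ≤ B) :
    (cnt (fun x => Y x ∧ x ∉ M) : ℝ) * Fintype.card G ≤ Fintype.card V * B := by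
  have havg := avg M G Y hY
  have h2 : ((∑ x, if Y x then miss M G x else 0 : ℕ) : ℝ) ≤ ∑ x : V, B := by
    push_cast
    apply Finset.sum_le_sum
    intro x _
    split_ifs with hx
    · exact h x hx
    · exact hB
  rw [← havg] at h2
  push_cast at h2
  refine h2.trans (le_of_eq ?_)
  simp

end part5

theorem stability (k h : ℕ) (ε : ℝ) (hε : 0 < ε) : ∃ n₀ : ℕ, ∀ (V : Type)
    [AddCommGroup V] [Module (ZMod 2) V] [Fintype V], n₀ ≤ Fintype.card V → ∀ M : Set V,
    2 ^ k * (cnt (fun x => x ∉ M) : ℝ) ≤ Fintype.card V → ¬ HasBB M h (k + 1) →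
    ∃ F : Submodule (ZMod 2) V, Module.finrank (ZMod 2) F + k = Module.finrank (ZMod 2) V ∧
      (cnt (fun x => x ∉ F ∧ x ∉ M) : ℝ) ≤ ε * Fintype.card V := by
  have hK : (0:ℝ) < 2 ^ (k + 1) := by positivity
  have hK1 : (1:ℝ) ≤ 2 ^ (k + 1) := one_le_pow₀ (by norm_num)
  have hH : (0:ℝ) < 2 ^ h := by positivity
  have hH1 : (1:ℝ) ≤ 2 ^ h := one_le_pow₀ (by norm_num)
  set ρ : ℝ := min (ε / 2) (1 / (2 * 2 ^ (k+1) * 2 ^ h)) with hρd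
  have hρ0 : 0 < ρ := by positivity
  have hρ1 : ρ ≤ ε / 2 := min_le_left _ _
  have hρ2 : ρ * 2 ^ (k+1) * 2 ^ h ≤ 1 / 2 := by
    have : ρ ≤ 1 / (2 * 2 ^ (k+1) * 2 ^ h) := min_le_right _ _
    rw [le_div_iff₀ (by positivity)] at this
    linarith
  have hρ3 : ρ * 2 ^ (k+1) ≤ 1 / 2 := by
    have : 0 < ρ * 2 ^ (k+1) := by positivity
    nlinarith
  have hρ4 : ρ ≤ 1 / 2 := by nlinarith
  set δ : ℝ := ρ / (2 * 2 ^ (k+1)) with hδd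
  have hδ0 : 0 < δ := by positivity
  have hδK : δ * (2 * 2 ^ (k+1)) = ρ := by rw [hδd]; field_simp
  have hδ1 : δ ≤ 1 / 4 := by nlinarith
  set η : ℝ := min (ε / 2) (1 / (4 * 2 ^ (k+1))) with hηd
  have hη0 : 0 < η := by positivity
  have hη1 : η ≤ ε / 2 := min_le_left _ _
  have hη2 : η * 2 ^ (k+1) ≤ 1 / 4 := by
    have : η ≤ 1 / (4 * 2 ^ (k+1)) := min_le_right _ _
    rw [le_div_iff₀ (by positivity)] at this
    linarith
  have hη3 : η ≤ 1 / 4 := by nlinarith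
  set ε' : ℝ := δ * η / 4 with hε'd
  have hε'0 : 0 < ε' := by positivity
  have hε'1 : ε' ≤ δ := by nlinarith
  have hε'2 : ε' ≤ 1 / 2 := by linarith
  have hκ : (δ + ε') * 2 ^ (k+1) ≤ ρ := by nlinarith
  obtain ⟨n₁, hA⟩ := affProp_exists h ε' hε'0
  set m := max n₁ h with hm
  obtain ⟨n₂, hES⟩ := erdos_stone k m 1 one_pos
  refine ⟨max n₂ ⌈2 ^ k * 2 ^ m / ε'⌉₊, ?_⟩
  intro V _ _ _ hn M hcard hM
  have hVpos : (0:ℝ) < Fintype.card V := by exact_mod_cast Fintype.card_pos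
  have hbig : 2 ^ k * 2 ^ m / ε' ≤ (Fintype.card V : ℝ) :=
    (Nat.le_ceil _).trans (by exact_mod_cast le_trans (le_max_right _ _) hn)
  rw [div_le_iff₀ hε'0] at hbig
  obtain ⟨G, g, hG, hB⟩ := hES V (le_trans (le_max_left _ _) hn) M (by linarith)
  have hGpos : (0:ℝ) < Fintype.card G := by exact_mod_cast Fintype.card_pos
  have hGc : Fintype.card G = 2 ^ m := by rw [card_pow, hG]
  have hn1 : n₁ ≤ Fintype.card G := by
    rw [hGc]; exact (le_max_left n₁ h).trans Nat.lt_two_pow_self.le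
  have hGc' : (Fintype.card G : ℝ) = 2 ^ m := by exact_mod_cast hGc
  have hXc := cnt_notX (η := η) hA hB hM hn1 hε'0 hδ0 (by linarith) (by rw [hε'd]; ring) hcard
    (by rw [hGc']; linarith)
  set X := Xset M G g δ with hXd
  set T := Tset M G g δ ρ with hTd
  have hXT : ∀ x ∈ X, ∃ c, x + g c ∈ T := fun x hx => Xset_T hA hB hM hn1 hε'2 (by linarith) hκ hx
  have hcT : cnt (fun x => x ∈ X) ≤ 2 ^ k * cnt (fun x => x ∈ T) := by
    have h1 : ∀ c, cnt (fun x => x + g c ∈ T) = cnt (fun x => x ∈ T) := fun c =>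
      cnt_shift (fun x => x ∈ T) (g c)
    calc cnt (fun x => x ∈ X) ≤ ∑ c, cnt (fun x => x + g c ∈ T) := by
          simp_rw [cnt_eq]
          rw [Finset.sum_comm]
          apply Finset.sum_le_sum
          intro x _
          by_cases h : x ∈ X
          · rw [if_pos h]
            obtain ⟨c, hc⟩ := hXT x h
            have := Finset.single_le_sum (f := fun c => if x + g c ∈ T then 1 else 0)
              (fun _ _ => Nat.zero_le _) (Finset.mem_univ c)
            simpa [hc] using this
          · rw [if_neg h]; exact Nat.zero_le _
      _ = _ := by simp [h1]
  have hcT' : (cnt (fun x => x ∈ X) : ℝ) ≤ 2 ^ k * cnt (fun x => x ∈ T) := by exact_mod_cast hcT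
  have hcX : (cnt (fun x => x ∈ X) : ℝ) + cnt (fun x => x ∉ X) = Fintype.card V := by
    exact_mod_cast cnt_compl (fun x => x ∈ X)
  obtain ⟨F, hTF, hFr, hF⟩ := alg_lemma g X T hXT
    (by
      intro t ht c hc
      by_contra hne
      exact absurd hc.2.2 (not_lt.2 (ht.2.1 c hne)))
    (fun a ha b hb hab => Tset_add hA hB hM hn1 hε'2 (by linarith) (by linarith) hκ
      (by rw [hG]; exact le_max_right _ _) ha hb hab)
    (by
      have hk : (0:ℝ) < 2 ^ k := by positivity
      have : 4 * (cnt (fun x => x ∉ X) : ℝ) < cnt (fun x => x ∈ T) := by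
        rw [pow_succ] at hη2
        refine lt_of_mul_lt_mul_left (a := (2:ℝ) ^ k) ?_ hk.le
        have h1 : 2 ^ k * (4 * (cnt (fun x => x ∉ X) : ℝ)) ≤ 2 ^ k * (4 * (η * Fintype.card V)) := by
          gcongr
        nlinarith
      exact_mod_cast this)
  refine ⟨F, hFr, ?_⟩
  have hGF : G ≤ F := by
    intro y hy
    apply hF
    have : 0 < cnt (fun x => x ∈ T) := by
      have h1 : (0:ℝ) < cnt (fun x => x ∈ X) := by nlinarith
      by_contra h0
      have : cnt (fun x => x ∈ T) = 0 := by omega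
      rw [this] at hcT'
      rw [Nat.cast_zero, mul_zero] at hcT'
      linarith
    obtain ⟨t, ht⟩ := cnt_pos this
    exact ⟨t, ht, Tset_shift_G ht y hy⟩
  have h1 : ((cnt (fun x => (x ∈ X ∧ x ∉ F) ∧ x ∉ M) : ℝ)) * Fintype.card G ≤
      (ρ * Fintype.card V) * Fintype.card G := by
    have := avg_le M G (fun x => x ∈ X ∧ x ∉ F) (by
      rintro x y hy ⟨h1, h2⟩
      refine ⟨Xset_shift_G h1 y hy, fun h3 => h2 ?_⟩
      have := F.sub_mem h3 (hGF hy)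
      simpa using this) (ρ * Fintype.card G) (by positivity) (by
      intro x hx
      obtain ⟨c, hc⟩ := hXT x hx.1
      have hc0 : c ≠ 0 := by
        rintro rfl
        apply hx.2; apply hTF; simpa using hc
      have := hc.2.1 c hc0
      rwa [z2_cancel] at this)
    refine this.trans (le_of_eq ?_)
    ring
  have h2 := le_of_mul_le_mul_right h1 hGpos
  have h3 : (cnt (fun x => x ∉ F ∧ x ∉ M) : ℝ) ≤ cnt (fun x => (x ∈ X ∧ x ∉ F) ∧ x ∉ M) +
      cnt (fun x => x ∉ X) := by
    have h4 := cnt_or (fun x => (x ∈ X ∧ x ∉ F) ∧ x ∉ M) (fun x => x ∉ X)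
    have h5 : cnt (fun x => x ∉ F ∧ x ∉ M) ≤ cnt (fun x => ((x ∈ X ∧ x ∉ F) ∧ x ∉ M) ∨ x ∉ X) := by
      apply cnt_mono
      intro x hx
      by_cases h : x ∈ X
      · exact Or.inl ⟨⟨h, hx.1⟩, hx.2⟩
      · exact Or.inr h
    exact_mod_cast h5.trans h4
  nlinarith

section part6
open Module

theorem HasRestriction.trans' {α β γ : Type*} [AddCommMonoid α] [AddCommMonoid β] [AddCommMonoid γ]
    [Module (ZMod 2) α] [Module (ZMod 2) β] [Module (ZMod 2) γ]
    {N : Set α} {M : Set β} {P : Set γ} (h1 : HasRestriction N M) (h2 : HasRestriction M P) :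
    HasRestriction N P := by
  obtain ⟨f, hf, hf'⟩ := h1
  obtain ⟨g, hg, hg'⟩ := h2
  refine ⟨g ∘ₗ f, hg.comp hf, ?_⟩
  rintro _ ⟨x, hx, rfl⟩
  exact hg' ⟨f x, hf' ⟨x, hx, rfl⟩, rfl⟩

variable {V : Type} [AddCommGroup V] [Module (ZMod 2) V] [Fintype V]

theorem R1 {d j : ℕ} (N : Set (Fin d → ZMod 2))
    (φ : (Fin d → ZMod 2) →ₗ[ZMod 2] (Fin j → ZMod 2)) (hφ : ∀ x ∈ N, φ x ≠ 0) (M : Set V)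
    (h : HasBB M d j) : HasRestriction N M := by
  obtain ⟨G, g, hG, hB⟩ := h
  let e : (Fin d → ZMod 2) ≃ₗ[ZMod 2] G := LinearEquiv.ofFinrankEq _ _ (by simp [hG])
  refine ⟨G.subtype ∘ₗ e.toLinearMap + g ∘ₗ φ, ?_, ?_⟩
  · rw [← LinearMap.ker_eq_bot, LinearMap.ker_eq_bot']
    intro x hx
    have hx' : (e x : V) + g (φ x) = 0 := hx
    by_cases h0 : φ x = 0
    · rw [h0, map_zero, add_zero] at hx'
      exact e.map_eq_zero_iff.1 (Subtype.ext hx')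
    · exfalso
      apply (hB _ h0).1
      rw [eq_neg_of_add_eq_zero_right hx']
      exact G.neg_mem (e x).2
  · rintro _ ⟨x, hx, rfl⟩
    have := (hB _ (hφ x hx)).2 (e x) (e x).2
    rw [add_comm] at this
    exact this

theorem exists_inj {X Y : Type} [AddCommGroup X] [Module (ZMod 2) X] [Fintype X]
    [AddCommGroup Y] [Module (ZMod 2) Y] [Fintype Y]
    (h : finrank (ZMod 2) X ≤ finrank (ZMod 2) Y) :
    ∃ q : X →ₗ[ZMod 2] Y, Function.Injective q := by
  obtain ⟨W, -, hW⟩ := exists_sub (⊤ : Submodule (ZMod 2) Y) (h := finrank (ZMod 2) X)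
    (by rw [finrank_top]; exact h)
  exact ⟨W.subtype ∘ₗ (LinearEquiv.ofFinrankEq X W hW.symm).toLinearMap,
    W.injective_subtype.comp (LinearEquiv.injective _)⟩

theorem exists_ext {A X Y : Type} [AddCommGroup A] [Module (ZMod 2) A] [Fintype A]
    [AddCommGroup X] [Module (ZMod 2) X] [Fintype X]
    [AddCommGroup Y] [Module (ZMod 2) Y] [Fintype Y]
    (h : finrank (ZMod 2) X ≤ finrank (ZMod 2) Y)
    (a : A →ₗ[ZMod 2] X) (ha : Function.Injective a)
    (b : A →ₗ[ZMod 2] Y) (hb : Function.Injective b) :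
    ∃ p : X →ₗ[ZMod 2] Y, Function.Injective p ∧ ∀ x, p (a x) = b x := by
  obtain ⟨l, hl⟩ := a.exists_leftInverse_of_injective (LinearMap.ker_eq_bot.2 ha)
  obtain ⟨l', hl'⟩ := b.exists_leftInverse_of_injective (LinearMap.ker_eq_bot.2 hb)
  have hl1 : ∀ x, l (a x) = x := fun x => LinearMap.congr_fun hl x
  have hl1' : ∀ x, l' (b x) = x := fun x => LinearMap.congr_fun hl' x
  have h1 := l.finrank_range_add_finrank_ker
  have h2 := l'.finrank_range_add_finrank_ker
  rw [LinearMap.range_eq_top.2 (fun x => ⟨a x, hl1 x⟩), finrank_top] at h1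
  rw [LinearMap.range_eq_top.2 (fun x => ⟨b x, hl1' x⟩), finrank_top] at h2
  obtain ⟨q, hq⟩ := exists_inj (X := LinearMap.ker l) (Y := LinearMap.ker l') (by omega)
  let π : X →ₗ[ZMod 2] LinearMap.ker l := (LinearMap.id - a ∘ₗ l).codRestrict _ (by
    intro x; simp [hl1])
  have hπ : ∀ x, (π x : X) = x - a (l x) := fun x => rfl
  refine ⟨b ∘ₗ l + (LinearMap.ker l').subtype ∘ₗ q ∘ₗ π, ?_, ?_⟩
  · rw [← LinearMap.ker_eq_bot, LinearMap.ker_eq_bot']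
    intro x hx
    have hx' : b (l x) + (q (π x) : Y) = 0 := hx
    have h3 : l x = 0 := by
      have h4 : l' (q (π x) : Y) = 0 := (q (π x)).2
      have := congrArg l' hx'
      rwa [map_add, hl1', h4, add_zero, map_zero] at this
    rw [h3, map_zero, zero_add] at hx'
    have h5 : π x = 0 := hq (by rw [map_zero]; exact Subtype.ext hx')
    have h6 := hπ x
    rw [h5, h3] at h6
    simpa using h6.symm
  · intro x
    have h5 : π (a x) = 0 := Subtype.ext (by rw [hπ, hl1]; simp)
    change b (l (a x)) + (q (π (a x)) : Y) = b x
    rw [h5, hl1]; simp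

theorem cnt_ncard {Y : Type} [Fintype Y] (P : Y → Prop) : cnt P = {y | P y}.ncard := by
  unfold cnt
  rw [Set.ncard_eq_toFinset_card']
  congr 1
  ext; simp

theorem miss_le (M : Set V) (F : Submodule (ZMod 2) V) (x : V) (hx : x ∉ F) :
    miss M F x ≤ cnt (fun x => x ∉ F ∧ x ∉ M) := by
  unfold miss
  rw [cnt_ncard, cnt_ncard]
  apply Set.ncard_le_ncard_of_injOn (fun y : F => x + (y : V))
  · intro y hy
    refine ⟨fun h => hx ?_, hy⟩
    have := F.sub_mem h y.2
    simpa using this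
  · intro y _ z _ h
    exact Subtype.ext (add_left_cancel h)

theorem R2 {a d k : ℕ} (D : Set (Fin a → ZMod 2)) (N M' : Set (Fin d → ZMod 2))
    (hc : IsCopyNnt D d k M') (hN : HasRestriction N M') (hkd : k ≤ d) (M : Set V)
    (F : Submodule (ZMod 2) V) (hF : finrank (ZMod 2) F + k = finrank (ZMod 2) V)
    (hd : d ≤ finrank (ZMod 2) V)
    (hm : cnt (fun x => x ∉ F ∧ x ∉ M) * 2 ^ d < Fintype.card F)
    (j : (Fin a → ZMod 2) →ₗ[ZMod 2] V) (hj : Function.Injective j) (hjF : ∀ x, j x ∈ F)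
    (hjM : j '' D ⊆ M) : HasRestriction N M := by
  refine hN.trans' ?_
  obtain ⟨FD, hFD, θ, hθ, hθF, rfl⟩ := hc
  obtain ⟨p, hp, hpθ⟩ := exists_ext (X := FD) (Y := F) (by omega) (θ.codRestrict FD hθF)
    (fun x y h => hθ (congrArg Subtype.val h)) (j.codRestrict F hjF)
    (fun x y h => hj (congrArg Subtype.val h))
  obtain ⟨l, hl⟩ := FD.subtype.exists_leftInverse_of_injective (by simp)
  have hl1 : ∀ x : FD, l x = x := fun x => LinearMap.congr_fun hl x
  have h1 := l.finrank_range_add_finrank_ker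
  rw [(LinearMap.range_eq_top (f := l)).2 (fun x => ⟨(x : Fin d → ZMod 2), hl1 x⟩), finrank_top, hFD] at h1
  have hU : finrank (ZMod 2) (Fin d → ZMod 2) = d := by simp
  have hE : finrank (ZMod 2) (LinearMap.ker l) = k := by omega
  let π : (Fin d → ZMod 2) →ₗ[ZMod 2] LinearMap.ker l := (LinearMap.id - FD.subtype ∘ₗ l).codRestrict _ (by
    intro x; simp [hl1])
  have hπ : ∀ x, (π x : Fin d → ZMod 2) = x - l x := fun x => rfl
  obtain ⟨Q, hQ⟩ := F.exists_isCompl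
  have hQ1 := Submodule.finrank_add_eq_of_isCompl hQ
  let q : LinearMap.ker l ≃ₗ[ZMod 2] Q := LinearEquiv.ofFinrankEq _ _ (by omega)
  let g0 : LinearMap.ker l →ₗ[ZMod 2] V := Q.subtype ∘ₗ q.toLinearMap
  have hg0 : ∀ e, g0 e ∈ F → e = 0 := by
    intro e he
    have h2 : g0 e ∈ Q := (q e).2
    have h3 : g0 e = 0 := by
      have : g0 e ∈ F ⊓ Q := ⟨he, h2⟩
      rw [hQ.inf_eq_bot] at this
      simpa using this
    exact q.map_eq_zero_iff.1 (Subtype.ext h3)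
  let H : Finset F := Finset.univ.image p
  have hH : H.card ≤ 2 ^ (d - k) := by
    refine Finset.card_image_le.trans ?_
    rw [Finset.card_univ, card_pow, hFD]
  obtain ⟨r, hr⟩ := random_ext M F g0 H (by
    intro e he
    have hE' : Fintype.card (LinearMap.ker l) = 2 ^ k := by rw [card_pow, hE]
    rw [hE']
    refine lt_of_le_of_lt ?_ hm
    apply Nat.mul_le_mul (miss_le M F _ (fun h => he (hg0 e h)))
    calc 2 ^ k * H.card ≤ 2 ^ k * 2 ^ (d - k) := Nat.mul_le_mul_left _ hH
      _ = 2 ^ d := by rw [← pow_add]; congr 1; omega)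
  refine ⟨F.subtype ∘ₗ p ∘ₗ l + g0 ∘ₗ π + F.subtype ∘ₗ r ∘ₗ π, ?_, ?_⟩
  · rw [← LinearMap.ker_eq_bot, LinearMap.ker_eq_bot']
    intro x hx
    have hx' : (p (l x) : V) + g0 (π x) + (r (π x) : V) = 0 := hx
    have h3 : g0 (π x) ∈ F := by
      have : g0 (π x) = - (p (l x) + r (π x) : F) := by
        rw [eq_neg_iff_add_eq_zero, ← hx']; push_cast; abel
      rw [this]
      exact F.neg_mem (Subtype.property _)
    have h4 := hg0 _ h3
    rw [h4] at hx'
    have h5 : l x = 0 := hp (Subtype.ext (by simpa using hx'))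
    have h6 := hπ x
    rw [h4, h5] at h6
    simpa using h6.symm
  · rintro _ ⟨x, hx, rfl⟩
    change (p (l x) : V) + g0 (π x) + (r (π x) : V) ∈ M
    rcases hx with ⟨y, hy, rfl⟩ | hx
    · have h7 : l (θ y) = θ.codRestrict FD hθF y := hl1 (θ.codRestrict FD hθF y)
      have h8 : π (θ y) = 0 := Subtype.ext (by rw [hπ, h7]; simp)
      rw [h8, h7, hpθ]
      simpa using hjM ⟨y, hy, rfl⟩
    · have h8 : π x ≠ 0 := by
        intro h
        apply hx
        have h9 := hπ x
        rw [h] at h9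
        have : x = l x := by
          rw [← sub_eq_zero]; exact h9.symm
        rw [this]; exact (l x).2
      have := hr _ h8 (p (l x)) (Finset.mem_image_of_mem _ (Finset.mem_univ _))
      convert this using 1
      abel

end part6

section part7
open Module

theorem exists_min (P : (Σ k : ℕ, Set (Fin k → ZMod 2)) → Prop) {m : ℕ} (M₀ : Set (Fin m → ZMod 2))
    (D₀ : Σ k : ℕ, Set (Fin k → ZMod 2)) (h0 : 0 ∉ D₀.2) (h1 : P D₀) (h2 : HasRestriction D₀.2 M₀) :
    ∃ D : Σ k : ℕ, Set (Fin k → ZMod 2), 0 ∉ D.2 ∧ P D ∧ HasRestriction D.2 M₀ ∧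
      ∀ D' : Σ k : ℕ, Set (Fin k → ZMod 2), 0 ∉ D'.2 → P D' → HasRestriction D'.2 D.2 →
        HasRestriction D.2 D'.2 := by
  obtain ⟨D, ⟨hD0, hD1, hD2⟩, hmin⟩ := (measure (fun D : Σ k : ℕ, Set (Fin k → ZMod 2) =>
    D.1 + D.2.ncard)).wf.has_min {D | 0 ∉ D.2 ∧ P D ∧ HasRestriction D.2 M₀} ⟨D₀, h0, h1, h2⟩
  refine ⟨D, hD0, hD1, hD2, ?_⟩
  intro D' h0' h1' h2'
  have h3 : ¬ (D'.1 + D'.2.ncard < D.1 + D.2.ncard) := hmin D' ⟨h0', h1', h2'.trans' hD2⟩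
  obtain ⟨ψ, hψ, hψ'⟩ := h2'
  have h4 : D'.1 ≤ D.1 := by
    have := LinearMap.finrank_le_finrank_of_injective hψ
    simpa using this
  have h5 : (ψ '' D'.2).ncard = D'.2.ncard := Set.ncard_image_of_injective _ hψ
  have h6 : (ψ '' D'.2).ncard ≤ D.2.ncard := Set.ncard_le_ncard hψ' (Set.toFinite _)
  have h7 : ψ '' D'.2 = D.2 := Set.eq_of_subset_of_ncard_le hψ' (by omega) (Set.toFinite _)
  have h8 : Function.Surjective ψ :=
    (LinearMap.injective_iff_surjective_of_finrank_eq_finrank (by simp; omega)).1 hψ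
  let e := LinearEquiv.ofBijective ψ ⟨hψ, h8⟩
  refine ⟨e.symm.toLinearMap, e.symm.injective, ?_⟩
  rw [← h7]
  rintro _ ⟨_, ⟨x, hx, rfl⟩, rfl⟩
  have : e.symm (ψ x) = x := e.symm_apply_apply x
  simpa [this] using hx

theorem R3 (𝒩 : Set (Σ k : ℕ, Set (Fin k → ZMod 2))) {n k : ℕ} (hkn : k ≤ n)
    (M₀ : Set (Fin (n - k) → ZMod 2)) (M : Set (Fin n → ZMod 2)) (hc : IsCopyNnt M₀ n k M)
    (N : Σ k : ℕ, Set (Fin k → ZMod 2)) (hN : N ∈ 𝒩) (hN0 : 0 ∉ N.2)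
    (hkN : k ≤ N.1) (hr : HasRestriction N.2 M) :
    ∃ D ∈ decompFam 𝒩 k, HasRestriction D.2 M₀ := by
  obtain ⟨F, hF, θ, hθ, hθF, rfl⟩ := hc
  obtain ⟨ψ, hψ, hψ'⟩ := hr
  have h1 := (F.mkQ ∘ₗ ψ).finrank_range_add_finrank_ker
  have h2 : finrank (ZMod 2) (LinearMap.range (F.mkQ ∘ₗ ψ)) ≤ k := by
    refine (Submodule.finrank_le _).trans ?_
    have := F.finrank_quotient_add_finrank
    rw [hF] at this
    simp at this
    omega
  have h3 : N.1 - k ≤ finrank (ZMod 2) (LinearMap.ker (F.mkQ ∘ₗ ψ)) := by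
    simp at h1; omega
  obtain ⟨G, hG, hGr⟩ := exists_sub _ h3
  have hGF : ∀ x ∈ G, ψ x ∈ F := by
    intro x hx
    have := hG hx
    simpa using this
  let τ : (Fin (N.1 - k) → ZMod 2) ≃ₗ[ZMod 2] G := LinearEquiv.ofFinrankEq _ _ (by simp [hGr])
  have hsurj : Function.Surjective (θ.codRestrict F hθF) :=
    (LinearMap.injective_iff_surjective_of_finrank_eq_finrank (by simp [hF])).1
      (fun x y h => hθ (congrArg Subtype.val h))
  let e := LinearEquiv.ofBijective (θ.codRestrict F hθF)
    ⟨fun x y h => hθ (congrArg Subtype.val h), hsurj⟩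
  have he : ∀ x, (e x : Fin n → ZMod 2) = θ x := fun x => rfl
  let D : Set (Fin (N.1 - k) → ZMod 2) := {x | (τ x : Fin N.1 → ZMod 2) ∈ N.2}
  obtain ⟨D', a1, a2, a3, a4⟩ := exists_min
    (fun D => ∃ N ∈ 𝒩, ∃ M : Set (Fin N.1 → ZMod 2), IsCopyNnt D.2 N.1 k M ∧ HasRestriction N.2 M)
    M₀ ⟨N.1 - k, D⟩ (by simpa [D] using hN0)
    (by
      refine ⟨N, hN, _, ⟨G, hGr, G.subtype ∘ₗ τ.toLinearMap,
        G.injective_subtype.comp τ.injective, fun x => (τ x).2, rfl⟩, LinearMap.id,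
        fun _ _ h => h, ?_⟩
      rintro _ ⟨x, hx, rfl⟩
      by_cases hxG : x ∈ G
      · left
        refine ⟨τ.symm ⟨x, hxG⟩, ?_, ?_⟩
        · simpa [D] using hx
        · simp
      · right; exact hxG)
    (by
      refine ⟨e.symm.toLinearMap ∘ₗ (ψ ∘ₗ G.subtype ∘ₗ τ.toLinearMap).codRestrict F
        (fun x => hGF _ (τ x).2), ?_, ?_⟩
      · intro x y h
        have h' := congrArg Subtype.val (e.symm.injective h)
        exact τ.injective (Subtype.ext (hψ h'))
      · rintro _ ⟨x, hx, rfl⟩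
        have h5 : ψ (τ x : Fin N.1 → ZMod 2) ∈ θ '' M₀ ∪ {x | x ∉ F} := hψ' ⟨_, hx, rfl⟩
        have h6 : ψ (τ x : Fin N.1 → ZMod 2) ∈ F := hGF _ (τ x).2
        rcases h5 with ⟨y, hy, hyx⟩ | h5
        · have : e.symm ((ψ ∘ₗ G.subtype ∘ₗ τ.toLinearMap).codRestrict F
            (fun x => hGF _ (τ x).2) x) = y := by
            rw [LinearEquiv.symm_apply_eq]
            exact Subtype.ext hyx.symm
          change e.symm _ ∈ M₀
          rw [this]; exact hy
        · exact absurd h6 h5)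
  exact ⟨D', ⟨a1, a2, a4⟩, a3⟩

theorem critNum_le_dim {n : ℕ} (M : Set (Fin n → ZMod 2)) (h0 : 0 ∉ M) : critNum M ≤ n :=
  Nat.sInf_le ⟨LinearMap.id, fun _ hx h => h0 (by rw [LinearMap.id_apply] at h; rwa [h] at hx)⟩

theorem empty_free (𝒩 : Set (Σ k : ℕ, Set (Fin k → ZMod 2))) (k : ℕ)
    (h0 : ∀ N ∈ 𝒩, 0 ∉ N.2)
    (hk1 : ∀ N ∈ 𝒩, k + 1 ≤ critNum N.2) (m : ℕ) :
    ∀ D ∈ decompFam 𝒩 k, ¬ HasRestriction D.2 (∅ : Set (Fin m → ZMod 2)) := by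
  rintro D ⟨-, ⟨N, hN, M, ⟨F, hF, θ, hθ, hθF, rfl⟩, ψ, hψ, hψ'⟩, -⟩ ⟨f, hf, hf'⟩
  have hD : D.2 = ∅ := by simpa using hf'
  rw [hD] at hψ'
  have hkN : k + 1 ≤ N.1 := (hk1 N hN).trans (critNum_le_dim _ (h0 N hN))
  have h1 := F.finrank_quotient_add_finrank
  rw [hF] at h1
  simp at h1
  let e : ((Fin N.1 → ZMod 2) ⧸ F) ≃ₗ[ZMod 2] (Fin k → ZMod 2) :=
    LinearEquiv.ofFinrankEq _ _ (by simp; omega)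
  have : critNum N.2 ≤ k := Nat.sInf_le ⟨e.toLinearMap ∘ₗ F.mkQ ∘ₗ ψ, by
    intro x hx h
    have h2 : ψ x ∈ θ '' ∅ ∪ {x | x ∉ F} := hψ' ⟨x, hx, rfl⟩
    have h3 : ψ x ∉ F := by simpa using h2
    apply h3
    have h4 : F.mkQ (ψ x) = 0 := e.map_eq_zero_iff.1 h
    simpa using h4⟩
  have := hk1 N hN
  omega

theorem ex_bdd (𝒩 : Set (Σ k : ℕ, Set (Fin k → ZMod 2))) (n : ℕ) :
    BddAbove {m | ∃ M : Set (Fin n → ZMod 2), 0 ∉ M ∧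
    (∀ N ∈ 𝒩, ¬ HasRestriction N.2 M) ∧ M.ncard = m} := by
  refine ⟨Nat.card (Fin n → ZMod 2), ?_⟩
  rintro _ ⟨M, -, -, rfl⟩
  rw [← Set.ncard_univ]
  exact Set.ncard_le_ncard (Set.subset_univ _) (Set.toFinite _)

theorem le_ex {𝒩 : Set (Σ k : ℕ, Set (Fin k → ZMod 2))} {n : ℕ} {M : Set (Fin n → ZMod 2)}
    (h0 : 0 ∉ M) (h : ∀ N ∈ 𝒩, ¬ HasRestriction N.2 M) : M.ncard ≤ exNumFam 𝒩 n :=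
  le_csSup (ex_bdd 𝒩 n) ⟨M, h0, h, rfl⟩

theorem ex_attained {𝒩 : Set (Σ k : ℕ, Set (Fin k → ZMod 2))} {n : ℕ} {M : Set (Fin n → ZMod 2)}
    (h0 : 0 ∉ M) (h : ∀ N ∈ 𝒩, ¬ HasRestriction N.2 M) :
    ∃ M : Set (Fin n → ZMod 2), 0 ∉ M ∧
    (∀ N ∈ 𝒩, ¬ HasRestriction N.2 M) ∧ M.ncard = exNumFam 𝒩 n := by
  have hne : {m | ∃ M : Set (Fin n → ZMod 2), 0 ∉ M ∧
    (∀ N ∈ 𝒩, ¬ HasRestriction N.2 M) ∧ M.ncard = m}.Nonempty := ⟨_, M, h0, h, rfl⟩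
  exact Nat.sSup_mem hne (ex_bdd 𝒩 n)

theorem ncard_F {n : ℕ} (F : Submodule (ZMod 2) (Fin n → ZMod 2)) {m : ℕ}
    (hF : finrank (ZMod 2) F = m) : (F : Set (Fin n → ZMod 2)).ncard = 2 ^ m := by
  rw [← hF, ← card_pow F, ← Nat.card_eq_fintype_card]
  rfl

theorem ncard_tot {n : ℕ} (S : Set (Fin n → ZMod 2)) : S.ncard + Sᶜ.ncard = 2 ^ n := by
  rw [Set.ncard_add_ncard_compl]
  simp

theorem copy_card {n k : ℕ} (M₀ : Set (Fin (n - k) → ZMod 2)) (M : Set (Fin n → ZMod 2))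
    (hc : IsCopyNnt M₀ n k M) : M.ncard + 2 ^ (n - k) = 2 ^ n + M₀.ncard := by
  obtain ⟨F, hF, θ, hθ, hθF, rfl⟩ := hc
  rw [Set.ncard_union_eq _ (Set.toFinite _) (Set.toFinite _), Set.ncard_image_of_injective _ hθ]
  · have h1 := ncard_F F hF
    have h2 := ncard_tot (F : Set (Fin n → ZMod 2))
    have h3 : {x | x ∉ F} = (F : Set (Fin n → ZMod 2))ᶜ := rfl
    rw [h3]; omega
  · rw [Set.disjoint_left]
    rintro _ ⟨x, -, rfl⟩ h
    exact h (hθF x)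

theorem exists_copy {n k : ℕ} (M₀ : Set (Fin (n - k) → ZMod 2)) : ∃ M, IsCopyNnt M₀ n k M := by
  obtain ⟨F, -, hF⟩ := exists_sub (⊤ : Submodule (ZMod 2) (Fin n → ZMod 2)) (h := n - k) (by simp)
  let e : (Fin (n - k) → ZMod 2) ≃ₗ[ZMod 2] F := LinearEquiv.ofFinrankEq _ _ (by simp [hF])
  exact ⟨_, F, hF, F.subtype ∘ₗ e.toLinearMap, F.injective_subtype.comp e.injective,
    fun x => (e x).2, rfl⟩

theorem copy_zero {n k : ℕ} (M₀ : Set (Fin (n - k) → ZMod 2)) (M : Set (Fin n → ZMod 2))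
    (hc : IsCopyNnt M₀ n k M) (h0 : 0 ∉ M₀) : 0 ∉ M := by
  obtain ⟨F, hF, θ, hθ, hθF, rfl⟩ := hc
  rintro (⟨x, hx, h⟩ | h)
  · have : x = 0 := hθ (by rw [h, map_zero])
    exact h0 (this ▸ hx)
  · exact h F.zero_mem

theorem upper (𝒩 : Set (Σ k : ℕ, Set (Fin k → ZMod 2))) (h𝒩fin : 𝒩.Finite)
    (h0 : ∀ N ∈ 𝒩, 0 ∉ N.2)
    (k : ℕ) (hk1 : ∀ N ∈ 𝒩, k + 1 ≤ critNum N.2) (hk2 : ∃ N ∈ 𝒩, critNum N.2 = k + 1) :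
    ∃ n₀ : ℕ, k ≤ n₀ ∧ ∀ n ≥ n₀, ∀ M : Set (Fin n → ZMod 2), 0 ∉ M →
      (∀ N ∈ 𝒩, ¬ HasRestriction N.2 M) →
      2 ^ n + exNumFam (decompFam 𝒩 k) (n - k) ≤ M.ncard + 2 ^ (n - k) →
      ∃ M₀ : Set (Fin (n - k) → ZMod 2), 0 ∉ M₀ ∧
            (∀ D ∈ decompFam 𝒩 k, ¬ HasRestriction D.2 M₀) ∧
            M₀.ncard = exNumFam (decompFam 𝒩 k) (n - k) ∧
            IsCopyNnt M₀ n k M := by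
  obtain ⟨N₀, hN₀, hcN₀⟩ := hk2
  have hφ : ∃ φ : (Fin N₀.1 → ZMod 2) →ₗ[ZMod 2] (Fin (k + 1) → ZMod 2), ∀ x ∈ N₀.2, φ x ≠ 0 := by
    have hne : {c | ∃ φ : (Fin N₀.1 → ZMod 2) →ₗ[ZMod 2] (Fin c → ZMod 2),
      ∀ x ∈ N₀.2, φ x ≠ 0}.Nonempty :=
      ⟨_, LinearMap.id, fun _ hx h => h0 _ hN₀ (by rw [LinearMap.id_apply] at h; rwa [h] at hx)⟩
    have := Nat.sInf_mem hne
    rw [← hcN₀]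
    exact this
  obtain ⟨φ, hφ⟩ := hφ
  obtain ⟨d, hd⟩ : ∃ d, ∀ N ∈ 𝒩, N.1 ≤ d := by
    obtain ⟨d, hd⟩ := (h𝒩fin.image (fun N => N.1)).bddAbove
    exact ⟨d, fun N hN => hd ⟨N, hN, rfl⟩⟩
  obtain ⟨n₁, hst⟩ := stability k N₀.1 (1 / 2 ^ (d + k + 1)) (by positivity)
  refine ⟨max n₁ (max k d), (le_max_left k d).trans (le_max_right _ _), ?_⟩
  intro n hn M hM0 hM hcard
  have hn1 : n₁ ≤ n := (le_max_left _ _).trans hn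
  have hkn : k ≤ n := (le_max_left k d).trans ((le_max_right _ _).trans hn)
  have hdn : d ≤ n := (le_max_right k d).trans ((le_max_right _ _).trans hn)
  have hVc : Fintype.card (Fin n → ZMod 2) = 2 ^ n := by simp
  have hpow : 2 ^ k * 2 ^ (n - k) = 2 ^ n := by rw [← pow_add]; congr 1; omega
  have htot := ncard_tot M
  have hMc : cnt (fun x => x ∉ M) = Mᶜ.ncard := cnt_ncard _
  obtain ⟨F, hF, hFc⟩ := hst (Fin n → ZMod 2) (by rw [hVc]; exact hn1.trans Nat.lt_two_pow_self.le) M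
    (by
      have : 2 ^ k * cnt (fun x => x ∉ M) ≤ Fintype.card (Fin n → ZMod 2) := by
        rw [hVc, ← hpow]
        apply Nat.mul_le_mul_left
        omega
      exact_mod_cast this)
    (fun h => hM N₀ hN₀ (R1 N₀.2 φ hφ M h))
  have hfr : finrank (ZMod 2) (Fin n → ZMod 2) = n := by simp
  have hFr : finrank (ZMod 2) F = n - k := by omega
  let e : (Fin (n - k) → ZMod 2) ≃ₗ[ZMod 2] F := LinearEquiv.ofFinrankEq _ _ (by simp [hFr])
  let θ : (Fin (n - k) → ZMod 2) →ₗ[ZMod 2] (Fin n → ZMod 2) := F.subtype ∘ₗ e.toLinearMap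
  have hθ : Function.Injective θ := F.injective_subtype.comp e.injective
  have hθF : ∀ x, θ x ∈ F := fun x => (e x).2
  have hθs : ∀ y ∈ F, ∃ x, θ x = y := fun y hy => ⟨e.symm ⟨y, hy⟩, by simp [θ]⟩
  have hM₀0 : 0 ∉ θ ⁻¹' M := by simpa using hM0
  have hsmall : cnt (fun x => x ∉ F ∧ x ∉ M) * 2 ^ d < Fintype.card F := by
    rw [card_pow, hFr]
    have h1 : (cnt (fun x => x ∉ F ∧ x ∉ M) : ℝ) * 2 ^ (d + k + 1) ≤ 2 ^ n := by
      rw [hVc] at hFc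
      have := mul_le_mul_of_nonneg_right hFc (show (0:ℝ) ≤ 2 ^ (d + k + 1) by positivity)
      refine this.trans (le_of_eq ?_)
      push_cast
      field_simp
    have h2 : cnt (fun x => x ∉ F ∧ x ∉ M) * 2 ^ (d + k + 1) ≤ 2 ^ n := by exact_mod_cast h1
    have h3 : 2 ^ k * (2 * (cnt (fun x => x ∉ F ∧ x ∉ M) * 2 ^ d)) ≤ 2 ^ k * 2 ^ (n - k) := by
      rw [hpow]; refine le_trans (le_of_eq ?_) h2; ring
    have h4 := Nat.le_of_mul_le_mul_left h3 (by positivity)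
    have h5 : 0 < 2 ^ (n - k) := by positivity
    omega
  have hfree : ∀ D ∈ decompFam 𝒩 k, ¬ HasRestriction D.2 (θ ⁻¹' M) := by
    rintro D ⟨-, ⟨N, hN, M', hc, hr⟩, -⟩ ⟨f, hf, hf'⟩
    refine hM N hN (R2 D.2 N.2 M' hc hr ?_ M F (by omega) (by rw [hfr]; exact (hd N hN).trans hdn) ?_
      (θ ∘ₗ f) (hθ.comp hf) (fun x => hθF _) ?_)
    · have := (hk1 N hN).trans (critNum_le_dim _ (h0 N hN))
      omega
    · refine lt_of_le_of_lt ?_ hsmall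
      exact Nat.mul_le_mul_left _ (Nat.pow_le_pow_right (by norm_num) (hd N hN))
    · rintro _ ⟨x, hx, rfl⟩
      exact hf' ⟨x, hx, rfl⟩
  have hle := le_ex hM₀0 hfree
  have hMF : (M ∩ F).ncard = (θ ⁻¹' M).ncard := by
    rw [← Set.ncard_image_of_injective _ hθ]
    congr 1
    ext y
    constructor
    · rintro ⟨h1, h2⟩
      obtain ⟨x, rfl⟩ := hθs y h2
      exact ⟨x, h1, rfl⟩
    · rintro ⟨x, hx, rfl⟩
      exact ⟨hx, hθF x⟩
  have hsp := Set.ncard_inter_add_ncard_diff_eq_ncard M (F : Set (Fin n → ZMod 2)) (Set.toFinite _)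
  have hsub : M \ (F : Set (Fin n → ZMod 2)) ⊆ (F : Set (Fin n → ZMod 2))ᶜ := fun x hx => hx.2
  have hsc := Set.ncard_le_ncard hsub (Set.toFinite _)
  have hFt := ncard_tot (F : Set (Fin n → ZMod 2))
  rw [ncard_F F hFr] at hFt
  have heq := Set.eq_of_subset_of_ncard_le hsub (by omega) (Set.toFinite _)
  refine ⟨θ ⁻¹' M, hM₀0, hfree, by omega, F, hFr, θ, hθ, hθF, ?_⟩
  ext y
  constructor
  · intro hy
    by_cases hyF : y ∈ F
    · obtain ⟨x, rfl⟩ := hθs y hyF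
      exact Or.inl ⟨x, hy, rfl⟩
    · exact Or.inr hyF
  · rintro (⟨x, hx, rfl⟩ | hy)
    · exact hx
    · have : y ∈ (F : Set (Fin n → ZMod 2))ᶜ := hy
      rw [← heq] at this
      exact this.1

end part7

/-- Main reduction theorem: Turán numbers in terms of the decomposition family. -/
theorem main_reduction (𝒩 : Set (Σ k : ℕ, Set (Fin k → ZMod 2)))
    (h𝒩ne : 𝒩.Nonempty) (h𝒩fin : 𝒩.Finite)
    (h𝒩mat : ∀ N ∈ 𝒩, 0 ∉ N.2 ∧ N.2.Nonempty)
    (k : ℕ) (hk1 : ∀ N ∈ 𝒩, k + 1 ≤ critNum N.2) (hk2 : ∃ N ∈ 𝒩, critNum N.2 = k + 1) :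
    ∃ n₀ : ℕ, ∀ n ≥ n₀,
      exNumFam 𝒩 n = 2 ^ n - 2 ^ (n - k) + exNumFam (decompFam 𝒩 k) (n - k) ∧
      ∀ M : Set (Fin n → ZMod 2), 0 ∉ M → (∀ N ∈ 𝒩, ¬ HasRestriction N.2 M) →
        (M.ncard = exNumFam 𝒩 n ↔
          ∃ M₀ : Set (Fin (n - k) → ZMod 2), 0 ∉ M₀ ∧
            (∀ D ∈ decompFam 𝒩 k, ¬ HasRestriction D.2 M₀) ∧
            M₀.ncard = exNumFam (decompFam 𝒩 k) (n - k) ∧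
            IsCopyNnt M₀ n k M) := by
  have h0 : ∀ N ∈ 𝒩, 0 ∉ N.2 := fun N hN => (h𝒩mat N hN).1
  obtain ⟨n₀, hkn₀, hup⟩ := upper 𝒩 h𝒩fin h0 k hk1 hk2
  refine ⟨n₀, fun n hn => ?_⟩
  have hkn : k ≤ n := hkn₀.trans hn
  have hpow : 2 ^ (n - k) ≤ 2 ^ n := Nat.pow_le_pow_right (by norm_num) (by omega)
  obtain ⟨M₀, hM₀0, hM₀, hM₀c⟩ := ex_attained (𝒩 := decompFam 𝒩 k) (n := n - k)
    (M := ∅) (by simp) (empty_free 𝒩 k h0 hk1 _)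
  obtain ⟨M₁, hM₁⟩ := exists_copy (n := n) (k := k) M₀
  have hM₁0 := copy_zero M₀ M₁ hM₁ hM₀0
  have hM₁f : ∀ N ∈ 𝒩, ¬ HasRestriction N.2 M₁ := by
    intro N hN hr
    have hkN := (hk1 N hN).trans (critNum_le_dim _ (h0 N hN))
    obtain ⟨D, hD, hr'⟩ := R3 𝒩 hkn M₀ M₁ hM₁ N hN (h0 N hN) (by omega) hr
    exact hM₀ D hD hr'
  have hM₁c := copy_card M₀ M₁ hM₁
  have hlow := le_ex hM₁0 hM₁f
  have hex : exNumFam 𝒩 n = 2 ^ n - 2 ^ (n - k) + exNumFam (decompFam 𝒩 k) (n - k) := by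
    obtain ⟨M₂, hM₂0, hM₂f, hM₂c⟩ := ex_attained hM₁0 hM₁f
    obtain ⟨M₃, -, -, h3, h4⟩ := hup n hn M₂ hM₂0 hM₂f (by omega)
    have := copy_card M₃ M₂ h4
    omega
  refine ⟨hex, fun M hM0 hM => ⟨fun h => hup n hn M hM0 hM (by omega), ?_⟩⟩
  rintro ⟨M₃, -, -, h3, h4⟩
  have := copy_card M₃ M h4
  omega
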